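/- arXiv:1902.06355 — 2 statements merged into one kernel-verified Lean document; each statement's English description precedes it below -/
import Mathlib

section
/- (Proposition 1: Carleman estimate for the transport operator.) Let D be a graph domain as in the context and let μ > β > 0. There exist constants s₀ > 0 and C > 0, depending only on n, T, β, μ, M, δ₀ and D (but not on H, p, u, s below), such that for every (M,δ₀)-admissible vector field H on closure(D) satisfying ⟨H(x), ∇ψ_H(x)⟩ ≥ μ for all x ∈ closure(D), every measurable p : D → ℝ with |p| ≤ M, every u ∈ C¹(closure(D) × [0,T]) and every s > s₀, one has: s ∫_D |u(x,0)|² e^{2sφ_H(x,0)} dx + s² ∫₀^T ∫_D |u(x,t)|² e^{2sφ_H(x,t)} dx dt + C e^{−Cs} I₋ ≤ C ∫₀^T ∫_D |∂_t u + ⟨H(x), ∇_x u⟩ + p(x)u|² e^{2sφ_H(x,t)} dx dt + C e^{Cs} I₊ + C s ∫_D |u(x,T)|² e^{2sφ_H(x,T)} dx, where I₊ := Σ_{i=1,2} ∫₀^T ∫_{B_{ρ₁}} 1_{⟨H(G_i(x')), ν_i(x')⟩ ≥ 0} |u(G_i(x'), t)|² ω_i(x') dx' dt and I₋ := Σ_{i=1,2}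 ∫₀^T ∫_{B_{ρ₁}} 1_{⟨H(G_i(x')), ν_i(x')⟩ ≤ 0} |⟨H(G_i(x')), ν_i(x')⟩| |u(G_i(x'), t)|² ω_i(x') dx' dt. -/
noncomputable section

open MeasureTheory Metric Set
open scoped RealInnerProductSpace

abbrev Esp (n : ℕ) : Type := EuclideanSpace ℝ (Fin n)

/-- The point `(x', xₙ) ∈ ℝ^{d+1} = ℝ^d × ℝ`. -/
noncomputable def graphMk (d : ℕ) (x' : Esp d) (xn : ℝ) : Esp (d+1) :=
  (EuclideanSpace.equiv (Fin (d+1)) ℝ).symm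
    (Fin.snoc (⇑(EuclideanSpace.equiv (Fin d) ℝ) x') xn)

/-- `H` is `(M, δ₀)`-admissible on the compact set `K`. -/
def IsAdmissible {n : ℕ} (M δ₀ : ℝ) (K : Set (Esp n)) (H : Esp n → Esp n) : Prop :=
  ∃ U : Set (Esp n), IsOpen U ∧ Convex ℝ U ∧ K ⊆ U ∧ ContDiffOn ℝ 1 H U ∧
    (∀ x ∈ U, ‖H x‖ ≤ M) ∧ (∀ x ∈ U, ‖fderiv ℝ H x‖ ≤ M) ∧ (∀ x ∈ K, δ₀ < ‖H x‖)

/-- `ψ_H(x) = ⟨x, H(x)⟩`. -/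
noncomputable def psiW {n : ℕ} (H : Esp n → Esp n) (x : Esp n) : ℝ := ⟪x, H x⟫

/-- The Carleman weight `φ_H(x,t) = -βt + ψ_H(x)`. -/
noncomputable def phiW {n : ℕ} (β : ℝ) (H : Esp n → Esp n) (x : Esp n) (t : ℝ) : ℝ :=
  -(β * t) + psiW H x

/-- Outward unit normal `ν₁` of the upper graph `xₙ = ℓ(x')`. -/
noncomputable def nuUp (d : ℕ) (ℓ : Esp d → ℝ) (x' : Esp d) : Esp (d+1) :=
  (Real.sqrt (1 + ‖gradient ℓ x'‖ ^ 2))⁻¹ • graphMk d (-(gradient ℓ x')) 1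

/-- Outward unit normal `ν₂` of the lower graph `xₙ = m(x')`. -/
noncomputable def nuDown (d : ℕ) (m : Esp d → ℝ) (x' : Esp d) : Esp (d+1) :=
  (Real.sqrt (1 + ‖gradient m x'‖ ^ 2))⁻¹ • graphMk d (gradient m x') (-1)

/-- Area element `ω(x') = √(1 + |∇m(x')|²)` of the graph of `m`. -/
noncomputable def omegaW (d : ℕ) (m : Esp d → ℝ) (x' : Esp d) : ℝ :=
  Real.sqrt (1 + ‖gradient m x'‖ ^ 2)

/-- The graph domain `D = {(x', xₙ) : |x'| < ρ₁, ℓ(x') − ℓ̃(x') < xₙ < ℓ(x')}`. -/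
def graphDomain (d : ℕ) (ρ₁ : ℝ) (ℓ ℓt : Esp d → ℝ) : Set (Esp (d+1)) :=
  {x | ∃ x' : Esp d, ∃ xn : ℝ, ‖x'‖ < ρ₁ ∧ ℓ x' - ℓt x' < xn ∧ xn < ℓ x' ∧
    x = graphMk d x' xn}

/-! ### The splitting `ℝ^{d+1} = ℝ^d × ℝ` -/

lemma graphMk_castSucc {d : ℕ} (x : Esp d) (a : ℝ) (i : Fin d) :
    graphMk d x a i.castSucc = x i := by
  simp [graphMk]

lemma graphMk_last {d : ℕ} (x : Esp d) (a : ℝ) : graphMk d x a (Fin.last d) = a := by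
  simp [graphMk]

/-- `graphMk` as a continuous linear map. -/
def graphMkL (d : ℕ) : Esp d × ℝ →L[ℝ] Esp (d + 1) :=
  LinearMap.toContinuousLinearMap
    { toFun := fun q => graphMk d q.1 q.2
      map_add' := fun p q => by
        ext i
        refine Fin.lastCases ?_ (fun i => ?_) i <;> simp [graphMk_castSucc, graphMk_last]
      map_smul' := fun c q => by
        ext i
        refine Fin.lastCases ?_ (fun i => ?_) i <;> simp [graphMk_castSucc, graphMk_last] }

lemma graphMkL_apply {d : ℕ} (q : Esp d × ℝ) : graphMkL d q = graphMk d q.1 q.2 := rfl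

lemma graphMk_eq_add_smul {d : ℕ} (x : Esp d) (a : ℝ) :
    graphMk d x a = graphMk d x 0 + a • graphMk d 0 1 := by
  ext i
  refine Fin.lastCases ?_ (fun i => ?_) i <;> simp [graphMk_castSucc, graphMk_last]

lemma continuous_graphMk {d : ℕ} : Continuous fun q : Esp d × ℝ => graphMk d q.1 q.2 :=
  (graphMkL d).continuous

lemma inner_graphMk {d : ℕ} (x y : Esp d) (a b : ℝ) :
    ⟪graphMk d x a, graphMk d y b⟫ = ⟪x, y⟫ + a * b := by
  simp [PiLp.inner_apply, Fin.sum_univ_castSucc, graphMk_castSucc, graphMk_last, mul_comm]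

lemma norm_graphMk_le {d : ℕ} (x : Esp d) (a : ℝ) : ‖graphMk d x a‖ ≤ ‖x‖ + |a| := by
  refine abs_le_of_sq_le_sq' ?_ (by positivity) |>.2
  rw [← real_inner_self_eq_norm_sq, inner_graphMk, real_inner_self_eq_norm_sq]
  nlinarith [mul_nonneg (norm_nonneg x) (abs_nonneg a), abs_mul_abs_self a]

lemma exists_eq_graphMk {d : ℕ} (z : Esp (d + 1)) : ∃ x a, z = graphMk d x a := by
  refine ⟨WithLp.toLp 2 fun i => z i.castSucc, z (Fin.last d), ?_⟩
  ext i
  refine Fin.lastCases ?_ (fun i => ?_) i <;> simp [graphMk_castSucc, graphMk_last]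

lemma graphMk_inj {d : ℕ} {x y : Esp d} {a b : ℝ} (h : graphMk d x a = graphMk d y b) :
    x = y ∧ a = b := by
  constructor
  · ext i
    rw [← graphMk_castSucc x a i, h, graphMk_castSucc]
  · rw [← graphMk_last x a, h, graphMk_last]

/-- `graphMk` as a measurable equivalence. -/
def graphMkEquiv (d : ℕ) : Esp d × ℝ ≃ᵐ Esp (d + 1) :=
  (((MeasurableEquiv.toLp 2 (Fin d → ℝ)).symm.prodCongr (MeasurableEquiv.refl ℝ)).trans
    MeasurableEquiv.prodComm).trans
    ((MeasurableEquiv.piFinSuccAbove (fun _ : Fin (d + 1) => ℝ) (Fin.last d)).symm.trans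
      (MeasurableEquiv.toLp 2 (Fin (d + 1) → ℝ)))

lemma graphMkEquiv_apply {d : ℕ} (q : Esp d × ℝ) : graphMkEquiv d q = graphMk d q.1 q.2 := by
  ext i
  refine Fin.lastCases ?_ (fun i => ?_) i
  · rw [graphMk_last]
    simp [graphMkEquiv, MeasurableEquiv.piFinSuccAbove, Fin.insertNthEquiv]
    rfl
  · rw [graphMk_castSucc]
    simp [graphMkEquiv, MeasurableEquiv.piFinSuccAbove, Fin.insertNthEquiv]
    rfl

lemma measurePreserving_graphMkEquiv (d : ℕ) : MeasurePreserving (graphMkEquiv d) := by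
  have h1 : MeasurePreserving
      ((MeasurableEquiv.toLp 2 (Fin d → ℝ)).symm.prodCongr (MeasurableEquiv.refl ℝ)) :=
    (PiLp.volume_preserving_ofLp (Fin d)).prod (MeasurePreserving.id volume)
  have h2 : MeasurePreserving (MeasurableEquiv.prodComm : (Fin d → ℝ) × ℝ ≃ᵐ _) :=
    Measure.measurePreserving_swap
  have h3 := (volume_preserving_piFinSuccAbove (fun _ : Fin (d + 1) => ℝ) (Fin.last d)).symm
  have h4 := PiLp.volume_preserving_toLp (Fin (d + 1))
  exact (h4.comp h3).comp (h2.comp h1)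

/-! ### The graph domain -/

lemma graphMk_mem_graphDomain {d : ℕ} {ρ₁ : ℝ} {ℓ ℓt : Esp d → ℝ} {x : Esp d} {a : ℝ} :
    graphMk d x a ∈ graphDomain d ρ₁ ℓ ℓt ↔ ‖x‖ < ρ₁ ∧ ℓ x - ℓt x < a ∧ a < ℓ x := by
  constructor
  · rintro ⟨y, b, h1, h2, h3, h4⟩
    obtain ⟨rfl, rfl⟩ := graphMk_inj h4
    exact ⟨h1, h2, h3⟩
  · rintro ⟨h1, h2, h3⟩
    exact ⟨x, a, h1, h2, h3, rfl⟩

lemma isOpen_graphDomain {d : ℕ} {ρ₁ : ℝ} {ℓ ℓt : Esp d → ℝ}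
    (hℓ : ContinuousOn ℓ (ball 0 ρ₁)) (hℓt : ContinuousOn ℓt (ball 0 ρ₁)) :
    IsOpen (graphDomain d ρ₁ ℓ ℓt) := by
  have hπ : Continuous fun z : Esp (d + 1) =>
      ((WithLp.toLp 2 fun i => z i.castSucc : Esp d), z (Fin.last d)) := by fun_prop
  have key : graphDomain d ρ₁ ℓ ℓt = (fun z : Esp (d + 1) =>
      ((WithLp.toLp 2 fun i => z i.castSucc : Esp d), z (Fin.last d))) ⁻¹'
        ((ball 0 ρ₁ ×ˢ univ) ∩ (fun q : Esp d × ℝ => (q.2 - (ℓ q.1 - ℓt q.1), ℓ q.1 - q.2)) ⁻¹'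
          (Ioi 0 ×ˢ Ioi 0)) := by
    ext z
    obtain ⟨x, a, rfl⟩ := exists_eq_graphMk z
    have hx : (WithLp.toLp 2 fun i => graphMk d x a i.castSucc : Esp d) = x := by
      ext i
      simp [graphMk_castSucc]
    simp only [graphMk_mem_graphDomain, mem_preimage, hx, graphMk_last]
    simp
  rw [key]
  refine IsOpen.preimage hπ (ContinuousOn.isOpen_inter_preimage ?_ (isOpen_ball.prod isOpen_univ)
    (isOpen_Ioi.prod isOpen_Ioi))
  have h1 : ContinuousOn (fun q : Esp d × ℝ => ℓ q.1) (ball 0 ρ₁ ×ˢ univ) :=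
    hℓ.comp continuousOn_fst fun q hq => hq.1
  have h2 : ContinuousOn (fun q : Esp d × ℝ => ℓt q.1) (ball 0 ρ₁ ×ˢ univ) :=
    hℓt.comp continuousOn_fst fun q hq => hq.1
  exact (continuousOn_snd.sub (h1.sub h2)).prodMk (h1.sub continuousOn_snd)

lemma isBounded_graphDomain {d : ℕ} {ρ₁ : ℝ} {ℓ ℓt : Esp d → ℝ}
    (hℓ : ContinuousOn ℓ (closedBall 0 ρ₁)) (hℓt : ContinuousOn ℓt (closedBall 0 ρ₁)) :
    Bornology.IsBounded (graphDomain d ρ₁ ℓ ℓt) := by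
  obtain ⟨A, hA⟩ := (isCompact_closedBall (0 : Esp d) ρ₁).exists_bound_of_continuousOn hℓ
  obtain ⟨B, hB⟩ := (isCompact_closedBall (0 : Esp d) ρ₁).exists_bound_of_continuousOn hℓt
  refine isBounded_iff_forall_norm_le.2 ⟨ρ₁ + (A + B), ?_⟩
  rintro _ ⟨x, a, h1, h2, h3, rfl⟩
  have hx : x ∈ closedBall (0 : Esp d) ρ₁ := by simpa using h1.le
  have hA := abs_le.1 (hA x hx)
  have hB := abs_le.1 (hB x hx)
  refine (norm_graphMk_le x a).trans (add_le_add h1.le (abs_le.2 ⟨?_, ?_⟩)) <;> linarith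

lemma graphMk_mem_closure_graphDomain {d : ℕ} {ρ₁ : ℝ} {ℓ ℓt : Esp d → ℝ} {x : Esp d} {a : ℝ}
    (hx : ‖x‖ < ρ₁) (hpos : 0 < ℓt x) (ha : a ∈ Icc (ℓ x - ℓt x) (ℓ x)) :
    graphMk d x a ∈ closure (graphDomain d ρ₁ ℓ ℓt) := by
  have hc : Continuous fun b : ℝ => graphMk d x b :=
    continuous_graphMk.comp (continuous_const.prodMk continuous_id)
  rw [← closure_Ioo (by linarith)] at ha
  exact map_mem_closure hc ha fun b hb => graphMk_mem_graphDomain.2 ⟨hx, hb.1, hb.2⟩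

/-! ### Functions of class `C¹` up to the boundary -/

lemma exists_bound_fderiv_of_contDiffOn {E F : Type*} [NormedAddCommGroup E] [NormedSpace ℝ E]
    [NormedAddCommGroup F] [NormedSpace ℝ F] {f : E → F} {K O : Set E} (hK : IsCompact K)
    (hO : IsOpen O) (hOK : O ⊆ K) (hf : ContDiffOn ℝ 1 f K) :
    ∃ C, 0 ≤ C ∧ ∀ x ∈ O, ‖fderiv ℝ f x‖ ≤ C := by
  suffices h : ∃ C, 0 ≤ C ∧ ∀ x ∈ O ∩ K, ‖fderiv ℝ f x‖ ≤ C by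
    obtain ⟨C, hC, h⟩ := h
    exact ⟨C, hC, fun x hx => h x ⟨hx, hOK hx⟩⟩
  refine hK.induction_on (p := fun S => ∃ C, 0 ≤ C ∧ ∀ x ∈ O ∩ S, ‖fderiv ℝ f x‖ ≤ C)
    ⟨0, le_rfl, by simp⟩ ?_ ?_ ?_
  · rintro s t hst ⟨C, hC, h⟩
    exact ⟨C, hC, fun x hx => h x ⟨hx.1, hst hx.2⟩⟩
  · rintro s t ⟨C, hC, h⟩ ⟨C', hC', h'⟩
    refine ⟨max C C', hC.trans (le_max_left _ _), ?_⟩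
    rintro x ⟨hx, hs | ht⟩
    · exact (h x ⟨hx, hs⟩).trans (le_max_left _ _)
    · exact (h' x ⟨hx, ht⟩).trans (le_max_right _ _)
  · intro x hx
    obtain ⟨v, hv, -, -, f', hf', hc⟩ :=
      (contDiffWithinAt_succ_iff_hasFDerivWithinAt' (n := 0) (by simp)).1
        (by simpa using hf x hx)
    rw [insert_eq_of_mem hx] at hv
    have hb : ∀ᶠ y in nhdsWithin x K, ‖f' y‖ < ‖f' x‖ + 1 :=
      hc.continuousWithinAt.norm.eventually_lt continuousWithinAt_const (lt_add_one _)
    refine ⟨_, Filter.inter_mem hv hb, ‖f' x‖ + 1, by positivity, ?_⟩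
    rintro y ⟨hyO, hyv, hy⟩
    have := (hf' y hyv).hasFDerivAt (Filter.mem_of_superset (hO.mem_nhds hyO) hOK)
    rw [this.fderiv]
    exact le_of_lt hy

/-- `f` is continuous and bounded on `S`. -/
structure BddContOn {X E : Type*} [TopologicalSpace X] [NormedAddCommGroup E]
    (f : X → E) (S : Set X) : Prop where
  continuousOn : ContinuousOn f S
  bound : ∃ C, ∀ x ∈ S, ‖f x‖ ≤ C

namespace BddContOn

variable {X Y E F : Type*} [TopologicalSpace X] [TopologicalSpace Y] [NormedAddCommGroup E]
  [NormedAddCommGroup F] {S : Set X}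

lemma const (c : E) : BddContOn (fun _ : X => c) S := ⟨continuousOn_const, ‖c‖, fun _ _ => le_rfl⟩

lemma add {f g : X → E} (hf : BddContOn f S) (hg : BddContOn g S) :
    BddContOn (fun x => f x + g x) S := by
  obtain ⟨hf, A, hA⟩ := hf
  obtain ⟨hg, B, hB⟩ := hg
  exact ⟨hf.add hg, A + B, fun x hx => (norm_add_le _ _).trans (add_le_add (hA x hx) (hB x hx))⟩

lemma neg {f : X → E} (hf : BddContOn f S) : BddContOn (fun x => -f x) S := by
  obtain ⟨hf, A, hA⟩ := hf
  exact ⟨hf.neg, A, fun x hx => by simpa using hA x hx⟩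

lemma sub {f g : X → E} (hf : BddContOn f S) (hg : BddContOn g S) :
    BddContOn (fun x => f x - g x) S := by
  simpa only [sub_eq_add_neg] using hf.add hg.neg

lemma sum {ι : Type*} {f : ι → X → E} (s : Finset ι) (hf : ∀ i ∈ s, BddContOn (f i) S) :
    BddContOn (fun x => ∑ i ∈ s, f i x) S := by
  classical
  induction s using Finset.induction_on with
  | empty => simpa using const (0 : E)
  | insert a s ha ih =>
    simp only [Finset.sum_insert ha]
    exact (hf a (by simp)).add (ih fun i hi => hf i (by simp [hi]))

lemma mul {f g : X → ℝ} (hf : BddContOn f S) (hg : BddContOn g S) :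
    BddContOn (fun x => f x * g x) S := by
  obtain ⟨hf, A, hA⟩ := hf
  obtain ⟨hg, B, hB⟩ := hg
  refine ⟨hf.mul hg, A * B, fun x hx => ?_⟩
  rw [norm_mul]
  exact mul_le_mul (hA x hx) (hB x hx) (norm_nonneg _) ((norm_nonneg _).trans (hA x hx))

lemma clm_apply [NormedSpace ℝ E] [NormedSpace ℝ F] {f : X → E →L[ℝ] F} {g : X → E}
    (hf : BddContOn f S) (hg : BddContOn g S) : BddContOn (fun x => f x (g x)) S := by
  obtain ⟨hf, A, hA⟩ := hf
  obtain ⟨hg, B, hB⟩ := hg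
  refine ⟨hf.clm_apply hg, A * B, fun x hx => ((f x).le_opNorm _).trans ?_⟩
  exact mul_le_mul (hA x hx) (hB x hx) (norm_nonneg _) ((norm_nonneg _).trans (hA x hx))

lemma prodMk {f : X → E} {g : X → F} (hf : BddContOn f S) (hg : BddContOn g S) :
    BddContOn (fun x => (f x, g x)) S := by
  obtain ⟨hf, A, hA⟩ := hf
  obtain ⟨hg, B, hB⟩ := hg
  exact ⟨hf.prodMk hg, max A B, fun x hx => max_le_max (hA x hx) (hB x hx)⟩

lemma comp {f : X → E} (hf : BddContOn f S) {φ : Y → X} {R : Set Y} (hφ : ContinuousOn φ R)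
    (h : MapsTo φ R S) : BddContOn (fun y => f (φ y)) R := by
  obtain ⟨hf, A, hA⟩ := hf
  exact ⟨hf.comp hφ h, A, fun y hy => hA _ (h hy)⟩

lemma mono {f : X → E} {R : Set X} (hf : BddContOn f S) (h : R ⊆ S) : BddContOn f R :=
  hf.comp continuousOn_id h

lemma of_isCompact {f : X → E} {K : Set X} (hK : IsCompact K) (hf : ContinuousOn f K)
    (h : S ⊆ K) : BddContOn f S := by
  obtain ⟨C, hC⟩ := hK.exists_bound_of_continuousOn hf
  exact ⟨hf.mono h, C, fun x hx => hC x (h hx)⟩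

lemma integrableOn [MeasurableSpace X] [OpensMeasurableSpace X] {μ : Measure X} {f : X → ℝ}
    (hf : BddContOn f S) (hS : MeasurableSet S) (hμ : μ S ≠ ⊤) : IntegrableOn f S μ := by
  obtain ⟨hf, C, hC⟩ := hf
  exact ⟨hf.aestronglyMeasurable hS, .restrict_of_bounded (C := C) hμ.lt_top
    ((ae_restrict_iff' hS).2 (.of_forall hC))⟩

end BddContOn

lemma bddContOn_fderiv {E F : Type*} [NormedAddCommGroup E] [NormedSpace ℝ E]
    [NormedAddCommGroup F] [NormedSpace ℝ F] {f : E → F} {K O : Set E} (hK : IsCompact K)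
    (hO : IsOpen O) (hOK : O ⊆ K) (hf : ContDiffOn ℝ 1 f K) :
    BddContOn (fderiv ℝ f) O := by
  obtain ⟨C, -, hC⟩ := exists_bound_fderiv_of_contDiffOn hK hO hOK hf
  exact ⟨(hf.mono hOK).continuousOn_fderiv_of_isOpen hO le_rfl, C, hC⟩

/-! ### The divergence theorem on a graph domain -/

lemma integral_ball_fderiv_eq_zero {E : Type*} [NormedAddCommGroup E] [NormedSpace ℝ E]
    [FiniteDimensional ℝ E] [MeasurableSpace E] [BorelSpace E] {ν : Measure E}
    [ν.IsAddHaarMeasure] {ρ C : ℝ} (hρ : 0 < ρ) {G : E → ℝ}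
    (hC : 0 ≤ C)
    (hd : ∀ x ∈ ball (0 : E) ρ, DifferentiableAt ℝ G x)
    (hb : ∀ x ∈ ball (0 : E) ρ, ‖fderiv ℝ G x‖ ≤ C)
    (h0 : ∀ x ∈ ball (0 : E) ρ, |G x| ≤ C * (ρ - ‖x‖)) (v : E) :
    ∫ x in ball (0 : E) ρ, fderiv ℝ G x v ∂ν = 0 := by
  set g : E → ℝ := (ball (0 : E) ρ).indicator G with hg
  have hout : ∀ x ∈ ball (0 : E) ρ, ∀ y ∉ ball (0 : E) ρ, |G x| ≤ C * ‖x - y‖ := by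
    intro x hx y hy
    refine (h0 x hx).trans (mul_le_mul_of_nonneg_left ?_ hC)
    have hy : ρ ≤ ‖y‖ := by simpa using hy
    linarith [norm_le_norm_add_norm_sub' y x, norm_sub_rev x y]
  have hlip : LipschitzWith C.toNNReal g := by
    refine LipschitzWith.of_dist_le_mul fun x y => ?_
    rw [Real.coe_toNNReal _ hC, Real.dist_eq, dist_eq_norm]
    by_cases hx : x ∈ ball (0 : E) ρ <;> by_cases hy : y ∈ ball (0 : E) ρ
    · rw [hg, indicator_of_mem hx, indicator_of_mem hy]
      exact (convex_ball (0 : E) ρ).norm_image_sub_le_of_norm_fderiv_le hd hb hy hx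
    · rw [hg, indicator_of_mem hx, indicator_of_notMem hy, sub_zero]
      exact hout x hx y hy
    · rw [hg, indicator_of_notMem hx, indicator_of_mem hy, zero_sub, abs_neg, norm_sub_rev]
      exact hout y hy x hx
    · rw [hg, indicator_of_notMem hx, indicator_of_notMem hy]
      simpa using mul_nonneg hC (norm_nonneg _)
  have hsupp : HasCompactSupport g :=
    HasCompactSupport.intro (isCompact_closedBall (0 : E) ρ) fun x hx =>
      indicator_of_notMem (fun h => hx (ball_subset_closedBall h)) _
  have h1 := LipschitzWith.integral_lineDeriv_mul_eq (μ := ν)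
    (LipschitzWith.const (1 : ℝ)) hlip hsupp (-v)
  have hconst : ∀ x : E, lineDeriv ℝ (fun _ : E => (1 : ℝ)) x (-v) = 0 := fun x => by
    simp [lineDeriv]
  simp only [hconst, zero_mul, integral_zero, neg_neg, mul_one] at h1
  rw [← integral_indicator measurableSet_ball]
  refine Eq.trans ?_ h1.symm
  refine integral_congr_ae ?_
  have hs : ∀ᵐ x ∂ν, x ∉ sphere (0 : E) ρ :=
    measure_eq_zero_iff_ae_notMem.1 (Measure.addHaar_sphere_of_ne_zero ν 0 hρ.ne')
  filter_upwards [hs] with x hx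
  by_cases hxb : x ∈ ball (0 : E) ρ
  · rw [indicator_of_mem hxb]
    have hE : g =ᶠ[nhds x] G := by
      filter_upwards [isOpen_ball.mem_nhds hxb] with y hy
      exact indicator_of_mem hy _
    rw [((hd x hxb).hasFDerivAt.congr_of_eventuallyEq hE).hasLineDerivAt v |>.lineDeriv]
  · rw [indicator_of_notMem hxb]
    have hxc : x ∈ (closedBall (0 : E) ρ)ᶜ := by
      simp only [mem_compl_iff, mem_closedBall, mem_ball, mem_sphere] at *
      exact fun h => hx (le_antisymm h (not_lt.1 hxb))
    have hE : g =ᶠ[nhds x] fun _ => 0 := by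
      filter_upwards [isClosed_closedBall.isOpen_compl.mem_nhds hxc] with y hy
      exact indicator_of_notMem (fun h => hy (ball_subset_closedBall h)) _
    rw [((hasFDerivAt_const (0 : ℝ) x).congr_of_eventuallyEq hE).hasLineDerivAt v |>.lineDeriv]
    simp

lemma setIntegral_graphDomain {d : ℕ} {ρ₁ : ℝ} {ℓ ℓt : Esp d → ℝ}
    (hD : MeasurableSet (graphDomain d ρ₁ ℓ ℓt)) {h : Esp (d + 1) → ℝ}
    (hh : IntegrableOn h (graphDomain d ρ₁ ℓ ℓt)) :
    ∫ z in graphDomain d ρ₁ ℓ ℓt, h z =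
      ∫ x in ball (0 : Esp d) ρ₁, ∫ a in Ioo (ℓ x - ℓt x) (ℓ x), h (graphMk d x a) := by
  have hmp := measurePreserving_graphMkEquiv d
  have hemb := (graphMkEquiv d).measurableEmbedding
  rw [← integral_indicator hD, ← hmp.integral_comp hemb, Measure.volume_eq_prod, integral_prod,
    ← integral_indicator measurableSet_ball]
  · refine integral_congr_ae (.of_forall fun x => ?_)
    by_cases hx : x ∈ ball (0 : Esp d) ρ₁
    · rw [indicator_of_mem hx]
      dsimp only
      rw [← integral_indicator measurableSet_Ioo]
      refine integral_congr_ae (.of_forall fun a => ?_)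
      simp only [graphMkEquiv_apply, indicator, graphMk_mem_graphDomain, mem_Ioo]
      rw [mem_ball_zero_iff] at hx
      simp [hx]
    · rw [indicator_of_notMem hx]
      refine integral_eq_zero_of_ae (.of_forall fun a => ?_)
      simp only [graphMkEquiv_apply, indicator, graphMk_mem_graphDomain]
      rw [mem_ball_zero_iff] at hx
      simp [hx]
  · rw [← Measure.volume_eq_prod]
    exact (hmp.integrable_comp_emb hemb).2 (hh.integrable_indicator hD)

lemma setIntegral_Ioo_eq_mul_unit {a c : ℝ} (hc : 0 < c) (h : ℝ → ℝ) :
    ∫ y in Ioo a (a + c), h y = ∫ θ in Ioo (0 : ℝ) 1, c * h (a + c * θ) := by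
  have := intervalIntegral.smul_integral_comp_add_mul (a := 0) (b := 1) h c a
  rw [mul_zero, mul_one, add_zero, intervalIntegral.integral_of_le zero_le_one,
    intervalIntegral.integral_of_le (by linarith), integral_Ioc_eq_integral_Ioo,
    integral_Ioc_eq_integral_Ioo] at this
  rw [← this, integral_const_mul, smul_eq_mul]

lemma exists_abs_le_mul_sub_norm {E : Type*} [NormedAddCommGroup E] [NormedSpace ℝ E]
    [FiniteDimensional ℝ E] [Nontrivial E] {ρ : ℝ} (hρ : 0 < ρ) {h : E → ℝ}
    (hh : ContDiffOn ℝ 1 h (closedBall 0 ρ)) (h0 : ∀ x, ‖x‖ = ρ → h x = 0) :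
    ∃ L, 0 ≤ L ∧ ∀ x ∈ ball (0 : E) ρ, |h x| ≤ L * (ρ - ‖x‖) := by
  have hu : UniqueDiffOn ℝ (closedBall (0 : E) ρ) :=
    uniqueDiffOn_convex (convex_closedBall 0 ρ)
      ⟨0, ball_subset_interior_closedBall (mem_ball_self hρ)⟩
  obtain ⟨L, hL⟩ := (isCompact_closedBall (0 : E) ρ).exists_bound_of_continuousOn
    (hh.continuousOn_fderivWithin hu le_rfl)
  refine ⟨L, (norm_nonneg _).trans (hL 0 (mem_closedBall_self hρ.le)), fun x hx => ?_⟩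
  rw [mem_ball_zero_iff] at hx
  obtain ⟨e, he, hxe⟩ : ∃ e : E, ‖e‖ = 1 ∧ x = ‖x‖ • e := by
    by_cases h : x = 0
    · obtain ⟨e, he⟩ := exists_norm_eq E zero_le_one
      exact ⟨e, he, by simp [h]⟩
    · refine ⟨‖x‖⁻¹ • x, norm_smul_inv_norm h, ?_⟩
      rw [smul_smul, mul_inv_cancel₀ (norm_ne_zero_iff.2 h), one_smul]
  have hy : ‖ρ • e‖ = ρ := by rw [norm_smul, he, mul_one, Real.norm_of_nonneg hρ.le]
  have key := (convex_closedBall (0 : E) ρ).norm_image_sub_le_of_norm_hasFDerivWithin_le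
    (fun z hz => (hh.differentiableOn one_ne_zero z hz).hasFDerivWithinAt) hL
    (by simpa using hy.le : ρ • e ∈ closedBall (0 : E) ρ)
    (by simpa using hx.le : x ∈ closedBall (0 : E) ρ)
  rw [h0 _ hy, sub_zero] at key
  have hn : ‖x - ρ • e‖ = ρ - ‖x‖ := by
    nth_rewrite 1 [hxe]
    rw [← sub_smul, norm_smul, he, mul_one, norm_sub_rev, Real.norm_of_nonneg (by linarith)]
  rwa [hn] at key

section Divergence

variable {d : ℕ} {ρ₁ : ℝ} {ℓ ℓt : Esp d → ℝ}

lemma mapsTo_flatten (hpos : ∀ x' : Esp d, ‖x'‖ < ρ₁ → 0 < ℓt x') :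
    MapsTo (fun q : Esp d × ℝ => graphMk d q.1 (ℓ q.1 - ℓt q.1 + ℓt q.1 * q.2))
      (ball 0 ρ₁ ×ˢ Ioo 0 1) (graphDomain d ρ₁ ℓ ℓt) := by
  rintro ⟨x, θ⟩ ⟨hx, h0, h1⟩
  simp only [mem_ball_zero_iff] at hx h0 h1
  have := hpos x hx
  refine graphMk_mem_graphDomain.2 ⟨hx, ?_, ?_⟩
  · dsimp only
    nlinarith
  · dsimp only
    nlinarith

lemma continuousOn_flatten {S : Set (Esp d)} (hℓ : ContinuousOn ℓ S) (hℓt : ContinuousOn ℓt S)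
    (R : Set ℝ) :
    ContinuousOn (fun q : Esp d × ℝ => graphMk d q.1 (ℓ q.1 - ℓt q.1 + ℓt q.1 * q.2))
      (S ×ˢ R) := by
  have h1 : ContinuousOn (fun q : Esp d × ℝ => ℓ q.1) (S ×ˢ R) :=
    hℓ.comp continuousOn_fst fun q hq => hq.1
  have h2 : ContinuousOn (fun q : Esp d × ℝ => ℓt q.1) (S ×ˢ R) :=
    hℓt.comp continuousOn_fst fun q hq => hq.1
  exact continuous_graphMk.comp_continuousOn
    (continuousOn_fst.prodMk ((h1.sub h2).add (h2.mul continuousOn_snd)))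

/-- The horizontal part of the divergence in the flattened coordinates `(x', θ)` integrates to
zero, because the thickness `ℓt` vanishes on the lateral boundary. -/
lemma integral_horizontal_eq_zero (hd : 1 ≤ d) (hρ₁ : 0 < ρ₁)
    (hℓ : ContDiffOn ℝ 1 ℓ (closedBall 0 ρ₁)) (hℓt : ContDiffOn ℝ 1 ℓt (closedBall 0 ρ₁))
    (hpos : ∀ x' : Esp d, ‖x'‖ < ρ₁ → 0 < ℓt x') (hzero : ∀ x' : Esp d, ‖x'‖ = ρ₁ → ℓt x' = 0)
    {f : Esp (d + 1) → ℝ} (hf : ContDiffOn ℝ 1 f (closure (graphDomain d ρ₁ ℓ ℓt)))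
    (v : Esp d) {θ : ℝ} (hθ : θ ∈ Ioo (0 : ℝ) 1) :
    ∫ x in ball (0 : Esp d) ρ₁,
      (fderiv ℝ ℓt x v * f (graphMk d x (ℓ x - ℓt x + ℓt x * θ)) +
        ℓt x * fderiv ℝ f (graphMk d x (ℓ x - ℓt x + ℓt x * θ))
          (graphMk d v (fderiv ℝ ℓ x v - fderiv ℝ ℓt x v + fderiv ℝ ℓt x v * θ))) = 0 := by
  have : Nonempty (Fin d) := ⟨⟨0, hd⟩⟩
  have : Nontrivial (Esp d) := inferInstance
  have hO := isOpen_graphDomain (hℓ.continuousOn.mono ball_subset_closedBall)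
    (hℓt.continuousOn.mono ball_subset_closedBall)
  have hK := (isBounded_graphDomain hℓ.continuousOn hℓt.continuousOn).isCompact_closure
  have hdℓ : ∀ x ∈ ball (0 : Esp d) ρ₁, DifferentiableAt ℝ ℓ x := fun x hx =>
    (hℓ.differentiableOn one_ne_zero).differentiableAt
      (Filter.mem_of_superset (isOpen_ball.mem_nhds hx) ball_subset_closedBall)
  have hdℓt : ∀ x ∈ ball (0 : Esp d) ρ₁, DifferentiableAt ℝ ℓt x := fun x hx =>
    (hℓt.differentiableOn one_ne_zero).differentiableAt
      (Filter.mem_of_superset (isOpen_ball.mem_nhds hx) ball_subset_closedBall)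
  have hdf : ∀ x ∈ graphDomain d ρ₁ ℓ ℓt, DifferentiableAt ℝ f x := fun x hx =>
    (hf.differentiableOn one_ne_zero).differentiableAt
      (Filter.mem_of_superset (hO.mem_nhds hx) subset_closure)
  obtain ⟨A, hA0, hA⟩ := exists_bound_fderiv_of_contDiffOn hK hO subset_closure hf
  obtain ⟨B, hB0, hB⟩ := exists_bound_fderiv_of_contDiffOn (isCompact_closedBall (0 : Esp d) ρ₁)
    isOpen_ball ball_subset_closedBall hℓ
  obtain ⟨B', hB0', hB'⟩ := exists_bound_fderiv_of_contDiffOn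
    (isCompact_closedBall (0 : Esp d) ρ₁) isOpen_ball ball_subset_closedBall hℓt
  obtain ⟨F, hF⟩ := hK.exists_bound_of_continuousOn hf.continuousOn
  obtain ⟨N, hN⟩ := (isCompact_closedBall (0 : Esp d) ρ₁).exists_bound_of_continuousOn
    hℓt.continuousOn
  obtain ⟨L, hL0, hL⟩ := exists_abs_le_mul_sub_norm hρ₁ hℓt hzero
  set Φ : Esp d → Esp (d + 1) := fun x => graphMk d x (ℓ x - ℓt x + ℓt x * θ) with hΦ
  have hmem : ∀ x ∈ ball (0 : Esp d) ρ₁, Φ x ∈ graphDomain d ρ₁ ℓ ℓt := fun x hx =>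
    mapsTo_flatten hpos (x := (x, θ)) ⟨hx, hθ⟩
  set Λ : Esp d → Esp d →L[ℝ] ℝ := fun x =>
    fderiv ℝ ℓ x - fderiv ℝ ℓt x + θ • fderiv ℝ ℓt x with hΛ
  set DΦ : Esp d → Esp d →L[ℝ] Esp (d + 1) := fun x =>
    (graphMkL d).comp ((ContinuousLinearMap.id ℝ (Esp d)).prod (Λ x)) with hDΦ
  have hΦd : ∀ x ∈ ball (0 : Esp d) ρ₁, HasFDerivAt Φ (DΦ x) x := by
    intro x hx
    have h1 : HasFDerivAt (fun y => ℓ y - ℓt y + ℓt y * θ) (Λ x) x :=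
      ((hdℓ x hx).hasFDerivAt.sub (hdℓt x hx).hasFDerivAt).add
        ((hdℓt x hx).hasFDerivAt.mul_const θ)
    exact (graphMkL d).hasFDerivAt.comp x ((hasFDerivAt_id x).prodMk h1)
  have hG : ∀ x ∈ ball (0 : Esp d) ρ₁, HasFDerivAt (fun y => ℓt y * f (Φ y))
      (ℓt x • (fderiv ℝ f (Φ x)).comp (DΦ x) + f (Φ x) • fderiv ℝ ℓt x) x := fun x hx =>
    (hdℓt x hx).hasFDerivAt.mul (((hdf _ (hmem x hx)).hasFDerivAt).comp x (hΦd x hx))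
  set W : ℝ := ‖graphMkL d‖ * max 1 (B + B' + B') with hW
  have hDΦb : ∀ x ∈ ball (0 : Esp d) ρ₁, ‖DΦ x‖ ≤ W := by
    intro x hx
    refine (ContinuousLinearMap.opNorm_comp_le _ _).trans
      (mul_le_mul_of_nonneg_left ?_ (norm_nonneg _))
    rw [ContinuousLinearMap.opNorm_prod]
    refine max_le_max ContinuousLinearMap.norm_id_le ?_
    refine (norm_add_le _ _).trans (add_le_add ((norm_sub_le _ _).trans
      (add_le_add (hB x hx) (hB' x hx))) ?_)
    rw [norm_smul, Real.norm_of_nonneg hθ.1.le]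
    nlinarith [hB' x hx, hθ.1, hθ.2, norm_nonneg (fderiv ℝ ℓt x)]
  have hN0 : 0 ≤ N := (norm_nonneg _).trans (hN 0 (mem_closedBall_self hρ₁.le))
  have hF0 : 0 ≤ F := (norm_nonneg _).trans
    (hF _ (subset_closure (hmem 0 (mem_ball_self hρ₁))))
  have hW0 : 0 ≤ W := by positivity
  have key := integral_ball_fderiv_eq_zero (ν := volume) (C := N * (A * W) + F * B' + L * F) hρ₁
    (by positivity) (fun x hx => (hG x hx).differentiableAt) ?_ ?_ v
  · rw [← key]
    refine setIntegral_congr_fun measurableSet_ball fun x hx => ?_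
    rw [(hG x hx).fderiv]
    simp only [hΦ, hΛ, hDΦ, _root_.add_apply, _root_.smul_apply,
      ContinuousLinearMap.comp_apply, ContinuousLinearMap.prod_apply, graphMkL_apply,
      _root_.sub_apply, smul_eq_mul, ContinuousLinearMap.id_apply]
    ring_nf
  · intro x hx
    rw [(hG x hx).fderiv]
    have h1 : ‖ℓt x • (fderiv ℝ f (Φ x)).comp (DΦ x)‖ ≤ N * (A * W) := by
      rw [norm_smul]
      exact mul_le_mul (hN x (ball_subset_closedBall hx))
        ((ContinuousLinearMap.opNorm_comp_le _ _).trans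
          (mul_le_mul (hA _ (hmem x hx)) (hDΦb x hx) (norm_nonneg _) hA0)) (norm_nonneg _) hN0
    have h2 : ‖f (Φ x) • fderiv ℝ ℓt x‖ ≤ F * B' := by
      rw [norm_smul]
      exact mul_le_mul (hF _ (subset_closure (hmem x hx))) (hB' x hx) (norm_nonneg _) hF0
    have h3 : 0 ≤ L * F := by positivity
    linarith [norm_add_le (ℓt x • (fderiv ℝ f (Φ x)).comp (DΦ x)) (f (Φ x) • fderiv ℝ ℓt x)]
  · intro x hx
    have hr : 0 ≤ ρ₁ - ‖x‖ := by
      rw [mem_ball_zero_iff] at hx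
      linarith
    rw [abs_mul]
    calc |ℓt x| * |f (Φ x)| ≤ L * (ρ₁ - ‖x‖) * F :=
          mul_le_mul (hL x hx) (hF _ (subset_closure (hmem x hx))) (abs_nonneg _)
            (mul_nonneg hL0 hr)
      _ = L * F * (ρ₁ - ‖x‖) := by ring
      _ ≤ _ := mul_le_mul_of_nonneg_right (le_add_of_nonneg_left (by positivity)) hr

/-- The integral over a graph domain of a directional derivative of a function of class `C¹` up to
the boundary is a boundary integral. -/
lemma integral_graphDomain_fderiv (hd : 1 ≤ d) (hρ₁ : 0 < ρ₁)
    (hℓ : ContDiffOn ℝ 1 ℓ (closedBall 0 ρ₁)) (hℓt : ContDiffOn ℝ 1 ℓt (closedBall 0 ρ₁))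
    (hpos : ∀ x' : Esp d, ‖x'‖ < ρ₁ → 0 < ℓt x') (hzero : ∀ x' : Esp d, ‖x'‖ = ρ₁ → ℓt x' = 0)
    {f : Esp (d + 1) → ℝ} (hf : ContDiffOn ℝ 1 f (closure (graphDomain d ρ₁ ℓ ℓt)))
    (v : Esp d) (c : ℝ) :
    ∫ z in graphDomain d ρ₁ ℓ ℓt, fderiv ℝ f z (graphMk d v c) =
      ∫ x in ball (0 : Esp d) ρ₁,
        (f (graphMk d x (ℓ x)) * (c - fderiv ℝ ℓ x v) -
          f (graphMk d x (ℓ x - ℓt x)) * (c - (fderiv ℝ ℓ x v - fderiv ℝ ℓt x v))) := by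
  have hO := isOpen_graphDomain (hℓ.continuousOn.mono ball_subset_closedBall)
    (hℓt.continuousOn.mono ball_subset_closedBall)
  have hbd := isBounded_graphDomain hℓ.continuousOn hℓt.continuousOn
  have hK := hbd.isCompact_closure
  have hdf : ∀ x ∈ graphDomain d ρ₁ ℓ ℓt, DifferentiableAt ℝ f x := fun x hx =>
    (hf.differentiableOn one_ne_zero).differentiableAt
      (Filter.mem_of_superset (hO.mem_nhds hx) subset_closure)
  have hDf := bddContOn_fderiv hK hO subset_closure hf
  have hmaps := mapsTo_flatten (ℓ := ℓ) hpos
  have hflat := continuousOn_flatten (hℓ.continuousOn.mono ball_subset_closedBall)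
    (hℓt.continuousOn.mono ball_subset_closedBall) (Ioo (0 : ℝ) 1)
  set S : Set (Esp d × ℝ) := ball 0 ρ₁ ×ˢ Ioo 0 1 with hS
  have hSm : MeasurableSet S := measurableSet_ball.prod measurableSet_Ioo
  have hSf : (volume.prod volume) S ≠ ⊤ := by
    rw [hS, Measure.prod_prod]
    exact ENNReal.mul_ne_top measure_ball_lt_top.ne measure_Ioo_lt_top.ne
  have bf : BddContOn (fun q : Esp d × ℝ => f (graphMk d q.1 (ℓ q.1 - ℓt q.1 + ℓt q.1 * q.2))) S :=
    (BddContOn.of_isCompact hK hf.continuousOn subset_closure).comp hflat hmaps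
  have bDf : BddContOn (fun q : Esp d × ℝ =>
      fderiv ℝ f (graphMk d q.1 (ℓ q.1 - ℓt q.1 + ℓt q.1 * q.2))) S := hDf.comp hflat hmaps
  have hfst : MapsTo (fun q : Esp d × ℝ => q.1) S (ball 0 ρ₁) := fun q hq => hq.1
  have bℓt : BddContOn (fun q : Esp d × ℝ => ℓt q.1) S :=
    (BddContOn.of_isCompact (isCompact_closedBall (0 : Esp d) ρ₁) hℓt.continuousOn
      ball_subset_closedBall).comp continuousOn_fst hfst
  have bP : BddContOn (fun q : Esp d × ℝ => fderiv ℝ ℓ q.1 v) S :=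
    ((bddContOn_fderiv (isCompact_closedBall (0 : Esp d) ρ₁) isOpen_ball ball_subset_closedBall
      hℓ).comp continuousOn_fst hfst).clm_apply (.const v)
  have bQ : BddContOn (fun q : Esp d × ℝ => fderiv ℝ ℓt q.1 v) S :=
    ((bddContOn_fderiv (isCompact_closedBall (0 : Esp d) ρ₁) isOpen_ball ball_subset_closedBall
      hℓt).comp continuousOn_fst hfst).clm_apply (.const v)
  have bθ : BddContOn (fun q : Esp d × ℝ => q.2) S :=
    ⟨continuousOn_snd, 1, fun q hq => by
      rw [Real.norm_of_nonneg hq.2.1.le]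
      exact hq.2.2.le⟩
  have bR := (bP.sub bQ).add (bQ.mul bθ)
  set A : Esp d → ℝ → ℝ := fun x θ =>
    fderiv ℝ ℓt x v * f (graphMk d x (ℓ x - ℓt x + ℓt x * θ)) +
        ℓt x * fderiv ℝ f (graphMk d x (ℓ x - ℓt x + ℓt x * θ))
          (graphMk d v (fderiv ℝ ℓ x v - fderiv ℝ ℓt x v + fderiv ℝ ℓt x v * θ)) with hA
  set B : Esp d → ℝ → ℝ := fun x θ =>
    fderiv ℝ f (graphMk d x (ℓ x - ℓt x + ℓt x * θ)) (graphMk d 0 (ℓt x)) *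
        (c - (fderiv ℝ ℓ x v - fderiv ℝ ℓt x v + fderiv ℝ ℓt x v * θ)) +
      f (graphMk d x (ℓ x - ℓt x + ℓt x * θ)) * (-fderiv ℝ ℓt x v) with hB
  have bA : BddContOn (fun q : Esp d × ℝ => A q.1 q.2) S := by
    exact (bQ.mul bf).add (bℓt.mul (bDf.clm_apply
      ((BddContOn.const (graphMkL d)).clm_apply ((BddContOn.const v).prodMk bR))))
  have bB : BddContOn (fun q : Esp d × ℝ => B q.1 q.2) S := by
    exact ((bDf.clm_apply ((BddContOn.const (graphMkL d)).clm_apply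
      ((BddContOn.const 0).prodMk bℓt))).mul ((BddContOn.const c).sub bR)).add (bf.mul bQ.neg)
  have hAi := bA.integrableOn (μ := volume.prod volume) hSm hSf
  have hBi := bB.integrableOn (μ := volume.prod volume) hSm hSf
  rw [hS, IntegrableOn, ← Measure.prod_restrict] at hAi hBi
  have hsplit : ∀ x ∈ ball (0 : Esp d) ρ₁, ∀ θ,
      ℓt x * fderiv ℝ f (graphMk d x (ℓ x - ℓt x + ℓt x * θ)) (graphMk d v c) =
        A x θ + B x θ := by
    intro x hx θ
    simp only [hA, hB]
    rw [graphMk_eq_add_smul v c, graphMk_eq_add_smul v (_ + _), graphMk_eq_add_smul 0 (ℓt x),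
      show graphMk d (0 : Esp d) 0 = 0 from map_zero (graphMkL d)]
    simp only [map_add, map_smul, smul_eq_mul, map_zero]
    ring
  have hB1 : ∀ x ∈ ball (0 : Esp d) ρ₁, ∫ θ in Ioo (0 : ℝ) 1, B x θ =
      f (graphMk d x (ℓ x)) * (c - fderiv ℝ ℓ x v) -
          f (graphMk d x (ℓ x - ℓt x)) * (c - (fderiv ℝ ℓ x v - fderiv ℝ ℓt x v)) := by
    intro x hx
    have hxn : ‖x‖ < ρ₁ := by simpa using hx
    have hline : ∀ θ, HasDerivAt (fun θ : ℝ => graphMk d x (ℓ x - ℓt x + ℓt x * θ))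
        (graphMk d 0 (ℓt x)) θ := fun θ => by
      have h1 : HasDerivAt (fun θ : ℝ => (x, ℓ x - ℓt x + ℓt x * θ)) ((0 : Esp d), ℓt x) θ := by
        refine (hasDerivAt_const θ x).prodMk ?_
        simpa using ((hasDerivAt_id θ).const_mul (ℓt x)).const_add (ℓ x - ℓt x)
      exact (graphMkL d).hasFDerivAt.comp_hasDerivAt θ h1
    have hftc := intervalIntegral.integral_eq_sub_of_hasDerivAt_of_le (zero_le_one (α := ℝ))
      (f := fun θ => f (graphMk d x (ℓ x - ℓt x + ℓt x * θ)) *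
        (c - (fderiv ℝ ℓ x v - fderiv ℝ ℓt x v + fderiv ℝ ℓt x v * θ)))
      (f' := B x) ?_ ?_ ?_
    · rw [intervalIntegral.integral_of_le zero_le_one, integral_Ioc_eq_integral_Ioo] at hftc
      rw [hftc]
      simp
    · refine ContinuousOn.mul (hf.continuousOn.comp
        (fun θ _ => (hline θ).continuousAt.continuousWithinAt) fun θ hθ => ?_) (by fun_prop)
      have := hpos x hxn
      refine graphMk_mem_closure_graphDomain hxn this ⟨?_, ?_⟩ <;> nlinarith [hθ.1, hθ.2]
    · intro θ hθ
      have h1 := (hdf _ (hmaps (x := (x, θ)) ⟨hx, hθ⟩)).hasFDerivAt.comp_hasDerivAt θ (hline θ)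
      have h2 : HasDerivAt (fun θ : ℝ =>
          c - (fderiv ℝ ℓ x v - fderiv ℝ ℓt x v + fderiv ℝ ℓt x v * θ)) (-fderiv ℝ ℓt x v) θ := by
        simpa using (((hasDerivAt_id θ).const_mul (fderiv ℝ ℓt x v)).const_add
          (fderiv ℝ ℓ x v - fderiv ℝ ℓt x v)).const_sub c
      exact h1.mul h2
    · rw [intervalIntegrable_iff_integrableOn_Ioo_of_le zero_le_one]
      have hsec : ContinuousOn (fun θ : ℝ => (x, θ)) (Ioo (0 : ℝ) 1) := by fun_prop
      exact (bB.comp hsec fun θ hθ => ⟨hx, hθ⟩).integrableOn measurableSet_Ioo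
        measure_Ioo_lt_top.ne
  have hA0 : ∫ x in ball (0 : Esp d) ρ₁, ∫ θ in Ioo (0 : ℝ) 1, A x θ = 0 := by
    rw [integral_integral_swap hAi]
    refine (setIntegral_congr_fun measurableSet_Ioo fun θ hθ => ?_).trans (integral_zero _ _)
    exact integral_horizontal_eq_zero hd hρ₁ hℓ hℓt hpos hzero hf v hθ
  rw [setIntegral_graphDomain hO.measurableSet
    ((hDf.clm_apply (.const _)).integrableOn hO.measurableSet hbd.measure_lt_top.ne)]
  have hstep : ∀ᵐ x ∂volume.restrict (ball (0 : Esp d) ρ₁),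
      ∫ a in Ioo (ℓ x - ℓt x) (ℓ x), fderiv ℝ f (graphMk d x a) (graphMk d v c) =
        (∫ θ in Ioo (0 : ℝ) 1, A x θ) + ∫ θ in Ioo (0 : ℝ) 1, B x θ := by
    filter_upwards [hAi.prod_right_ae, hBi.prod_right_ae, ae_restrict_mem measurableSet_ball]
      with x h1 h2 hx
    have := setIntegral_Ioo_eq_mul_unit (a := ℓ x - ℓt x) (hpos x (by simpa using hx))
      fun a => fderiv ℝ f (graphMk d x a) (graphMk d v c)
    rw [sub_add_cancel] at this
    rw [this, ← integral_add h1 h2]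
    exact integral_congr_ae (.of_forall fun θ => hsplit x hx θ)
  rw [integral_congr_ae hstep, integral_add hAi.integral_prod_left hBi.integral_prod_left, hA0,
    zero_add]
  exact setIntegral_congr_fun measurableSet_ball hB1

end Divergence

section Flux

variable {d : ℕ} {ρ₁ : ℝ} {ℓ ℓt : Esp d → ℝ}

lemma continuousOn_graphMk {S : Set (Esp d)} {a : Esp d → ℝ} (ha : ContinuousOn a S) :
    ContinuousOn (fun x => graphMk d x (a x)) S :=
  continuous_graphMk.comp_continuousOn (continuousOn_id.prodMk ha)

lemma mapsTo_upper (hpos : ∀ x' : Esp d, ‖x'‖ < ρ₁ → 0 < ℓt x') :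
    MapsTo (fun x => graphMk d x (ℓ x)) (ball 0 ρ₁) (closure (graphDomain d ρ₁ ℓ ℓt)) :=
  fun x hx => by
    have hx := mem_ball_zero_iff.1 hx
    exact graphMk_mem_closure_graphDomain hx (hpos x hx) ⟨by linarith [hpos x hx], le_rfl⟩

lemma mapsTo_lower (hpos : ∀ x' : Esp d, ‖x'‖ < ρ₁ → 0 < ℓt x') :
    MapsTo (fun x => graphMk d x (ℓ x - ℓt x)) (ball 0 ρ₁)
      (closure (graphDomain d ρ₁ ℓ ℓt)) :=
  fun x hx => by
    have hx := mem_ball_zero_iff.1 hx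
    exact graphMk_mem_closure_graphDomain hx (hpos x hx) ⟨le_rfl, by linarith [hpos x hx]⟩

/-- The divergence of a vector field. -/
def divergence {n : ℕ} (H : Esp n → Esp n) (x : Esp n) : ℝ :=
  ∑ i, fderiv ℝ H x (EuclideanSpace.single i 1) i

lemma abs_divergence_le {n : ℕ} {H : Esp n → Esp n} {x : Esp n} {M : ℝ}
    (h : ‖fderiv ℝ H x‖ ≤ M) : |divergence H x| ≤ n * M := by
  calc |divergence H x| ≤ ∑ i : Fin n, |fderiv ℝ H x (EuclideanSpace.single i 1) i| :=
        Finset.abs_sum_le_sum_abs _ _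
    _ ≤ ∑ _i : Fin n, M := by
        refine Finset.sum_le_sum fun i _ => ?_
        refine (PiLp.norm_apply_le _ i).trans (((fderiv ℝ H x).le_opNorm _).trans ?_)
        simpa using h
    _ = n * M := by simp

lemma fderiv_eq_inner_gradient {E : Type*} [NormedAddCommGroup E] [InnerProductSpace ℝ E]
    [CompleteSpace E] (f : E → ℝ) (x v : E) : fderiv ℝ f x v = ⟪gradient f x, v⟫ := by
  rw [gradient, InnerProductSpace.toDual_symm_apply]

/-- The divergence theorem on a graph domain for a vector field `g H`. -/
lemma integral_graphDomain_divergence (hd : 1 ≤ d) (hρ₁ : 0 < ρ₁)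
    (hℓ : ContDiffOn ℝ 1 ℓ (closedBall 0 ρ₁)) (hℓt : ContDiffOn ℝ 1 ℓt (closedBall 0 ρ₁))
    (hpos : ∀ x' : Esp d, ‖x'‖ < ρ₁ → 0 < ℓt x') (hzero : ∀ x' : Esp d, ‖x'‖ = ρ₁ → ℓt x' = 0)
    {g : Esp (d + 1) → ℝ} (hg : ContDiffOn ℝ 1 g (closure (graphDomain d ρ₁ ℓ ℓt)))
    {H : Esp (d + 1) → Esp (d + 1)} (hH : ContDiffOn ℝ 1 H (closure (graphDomain d ρ₁ ℓ ℓt))) :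
    ∫ z in graphDomain d ρ₁ ℓ ℓt, (fderiv ℝ g z (H z) + g z * divergence H z) =
      ∫ x in ball (0 : Esp d) ρ₁,
        (g (graphMk d x (ℓ x)) * ⟪H (graphMk d x (ℓ x)), graphMk d (-gradient ℓ x) 1⟫ +
          g (graphMk d x (ℓ x - ℓt x)) * ⟪H (graphMk d x (ℓ x - ℓt x)),
            graphMk d (gradient (fun z => ℓ z - ℓt z) x) (-1)⟫) := by
  have hO := isOpen_graphDomain (hℓ.continuousOn.mono ball_subset_closedBall)
    (hℓt.continuousOn.mono ball_subset_closedBall)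
  have hbd := isBounded_graphDomain hℓ.continuousOn hℓt.continuousOn
  have hK := hbd.isCompact_closure
  have hnhds : ∀ x ∈ graphDomain d ρ₁ ℓ ℓt, closure (graphDomain d ρ₁ ℓ ℓt) ∈ nhds x :=
    fun x hx => Filter.mem_of_superset (hO.mem_nhds hx) subset_closure
  have hHi : ∀ i, ContDiffOn ℝ 1 (fun z => H z i) (closure (graphDomain d ρ₁ ℓ ℓt)) :=
    fun i => contDiffOn_euclidean.1 hH i
  have hgH := fun i => hg.mul (hHi i)
  have hDi := fun i => bddContOn_fderiv hK hO subset_closure (hgH i)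
  have hℓi := bddContOn_fderiv (isCompact_closedBall (0 : Esp d) ρ₁) isOpen_ball
    ball_subset_closedBall hℓ
  have hℓti := bddContOn_fderiv (isCompact_closedBall (0 : Esp d) ρ₁) isOpen_ball
    ball_subset_closedBall hℓt
  have hdiff : ∀ {h : Esp d → ℝ}, ContDiffOn ℝ 1 h (closedBall 0 ρ₁) →
      ∀ x ∈ ball (0 : Esp d) ρ₁, DifferentiableAt ℝ h x := fun hh x hx =>
    (hh.differentiableOn one_ne_zero).differentiableAt
      (Filter.mem_of_superset (isOpen_ball.mem_nhds hx) ball_subset_closedBall)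
  have hpt : ∀ z ∈ graphDomain d ρ₁ ℓ ℓt, fderiv ℝ g z (H z) + g z * divergence H z =
      ∑ i, fderiv ℝ (fun y => g y * H y i) z (EuclideanSpace.single i 1) := by
    intro z hz
    have h1 := (hg.differentiableOn one_ne_zero).differentiableAt (hnhds z hz)
    have h2 := (hH.differentiableOn one_ne_zero).differentiableAt (hnhds z hz)
    have h3 : ∀ i, HasFDerivAt (fun y => H y i)
        ((EuclideanSpace.proj i : Esp (d + 1) →L[ℝ] ℝ).comp (fderiv ℝ H z)) z := fun i =>
      (EuclideanSpace.proj i : Esp (d + 1) →L[ℝ] ℝ).hasFDerivAt.comp z h2.hasFDerivAt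
    have h4 : H z = ∑ i, H z i • EuclideanSpace.single i (1 : ℝ) := by
      ext j
      simp [Finset.sum_apply, Pi.single_apply]
    conv_lhs => rw [h4]
    simp only [map_sum, map_smul, divergence,
      Finset.mul_sum, ← Finset.sum_add_distrib]
    refine Finset.sum_congr rfl fun i _ => ?_
    have h5 : fderiv ℝ (fun y => g y * H y i) z = _ := (h1.hasFDerivAt.mul (h3 i)).fderiv
    rw [h5]
    simp
    ring
  have hdir : ∀ i : Fin (d + 1), ∃ v c, (EuclideanSpace.single i 1 : Esp (d + 1)) = graphMk d v c :=
    fun i => exists_eq_graphMk _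
  choose v c hvc using hdir
  rw [setIntegral_congr_fun hO.measurableSet hpt, integral_finsetSum]
  · have := fun i => integral_graphDomain_fderiv hd hρ₁ hℓ hℓt hpos hzero (hgH i) (v i) (c i)
    simp only [← hvc] at this
    simp only [this]
    rw [← integral_finsetSum]
    · refine setIntegral_congr_fun measurableSet_ball fun x hx => ?_
      have hN1 : ∀ i, c i - fderiv ℝ ℓ x (v i) = graphMk d (-gradient ℓ x) 1 i := fun i => by
        have : ⟪(EuclideanSpace.single i 1 : Esp (d + 1)), graphMk d (-gradient ℓ x) 1⟫ =
            graphMk d (-gradient ℓ x) 1 i := by simp [EuclideanSpace.inner_single_left]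
        rw [← this, hvc, inner_graphMk, fderiv_eq_inner_gradient, inner_neg_right,
          real_inner_comm]
        ring
      have hN2 : ∀ i, c i - (fderiv ℝ ℓ x (v i) - fderiv ℝ ℓt x (v i)) =
          -graphMk d (gradient (fun z => ℓ z - ℓt z) x) (-1) i := fun i => by
        have : ⟪(EuclideanSpace.single i 1 : Esp (d + 1)),
            graphMk d (gradient (fun z => ℓ z - ℓt z) x) (-1)⟫ =
            graphMk d (gradient (fun z => ℓ z - ℓt z) x) (-1) i := by
          simp [EuclideanSpace.inner_single_left]
        rw [← this, hvc, inner_graphMk, real_inner_comm, ← fderiv_eq_inner_gradient,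
          fderiv_fun_sub (hdiff hℓ x hx) (hdiff hℓt x hx), _root_.sub_apply]
        ring
      simp only [hN1, hN2, PiLp.inner_apply, Finset.mul_sum, ← Finset.sum_add_distrib]
      refine Finset.sum_congr rfl fun i _ => ?_
      simp
      ring
    · intro i _
      have hc1 := continuousOn_graphMk (hℓ.continuousOn.mono ball_subset_closedBall)
      have hc2 := continuousOn_graphMk
        ((hℓ.continuousOn.sub hℓt.continuousOn).mono ball_subset_closedBall)
      have b := BddContOn.of_isCompact hK (hgH i).continuousOn subset_rfl
      have bP := hℓi.clm_apply (.const (v i))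
      have bQ := hℓti.clm_apply (.const (v i))
      exact (((b.comp hc1 (mapsTo_upper hpos)).mul ((BddContOn.const (c i)).sub bP)).sub
        ((b.comp hc2 (mapsTo_lower hpos)).mul ((BddContOn.const (c i)).sub (bP.sub bQ)))).integrableOn
          measurableSet_ball measure_ball_lt_top.ne
  · intro i _
    exact ((hDi i).clm_apply (.const _)).integrableOn hO.measurableSet hbd.measure_lt_top.ne

end Flux

/-! ### The energy identity -/

section Energy

variable {d : ℕ} {ρ₁ T : ℝ} {ℓ ℓt : Esp d → ℝ}

lemma BddContOn.integrable_prod {X Y : Type*} [TopologicalSpace X] [TopologicalSpace Y]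
    [MeasurableSpace X] [MeasurableSpace Y] [OpensMeasurableSpace (X × Y)] {μ : Measure X}
    {ν : Measure Y} [SFinite μ] [SFinite ν] {A : Set X} {B : Set Y} {f : X × Y → ℝ}
    (hf : BddContOn f (A ×ˢ B)) (hA : MeasurableSet A) (hB : MeasurableSet B) (hμ : μ A ≠ ⊤)
    (hν : ν B ≠ ⊤) : Integrable f ((μ.restrict A).prod (ν.restrict B)) := by
  rw [Measure.prod_restrict]
  refine hf.integrableOn (hA.prod hB) ?_
  rw [Measure.prod_prod]
  exact ENNReal.mul_ne_top hμ hν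

lemma bddContOn_divergence {n : ℕ} {D : Set (Esp n)} (hO : IsOpen D)
    (hK : IsCompact (closure D)) {H : Esp n → Esp n} (hH : ContDiffOn ℝ 1 H (closure D)) :
    BddContOn (divergence H) D :=
  .sum _ fun i _ => (BddContOn.const (EuclideanSpace.proj i : Esp n →L[ℝ] ℝ)).clm_apply
    ((bddContOn_fderiv hK hO subset_closure hH).clm_apply (.const _))

/-- The energy identity for the transport operator on a space-time cylinder over a graph
domain. -/
lemma integral_transport_eq (hd : 1 ≤ d) (hT : 0 < T) (hρ₁ : 0 < ρ₁)
    (hℓ : ContDiffOn ℝ 1 ℓ (closedBall 0 ρ₁)) (hℓt : ContDiffOn ℝ 1 ℓt (closedBall 0 ρ₁))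
    (hpos : ∀ x' : Esp d, ‖x'‖ < ρ₁ → 0 < ℓt x') (hzero : ∀ x' : Esp d, ‖x'‖ = ρ₁ → ℓt x' = 0)
    {G : Esp (d + 1) × ℝ → ℝ}
    (hG : ContDiffOn ℝ 1 G (closure (graphDomain d ρ₁ ℓ ℓt) ×ˢ Icc 0 T))
    {H : Esp (d + 1) → Esp (d + 1)} (hH : ContDiffOn ℝ 1 H (closure (graphDomain d ρ₁ ℓ ℓt))) :
    ∫ t in Ioo 0 T, ∫ x in graphDomain d ρ₁ ℓ ℓt,
        (fderiv ℝ G (x, t) (H x, 1) + G (x, t) * divergence H x) =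
      (∫ x in graphDomain d ρ₁ ℓ ℓt, G (x, T)) - (∫ x in graphDomain d ρ₁ ℓ ℓt, G (x, 0)) +
      ∫ t in Ioo 0 T, ∫ x in ball (0 : Esp d) ρ₁,
        (G (graphMk d x (ℓ x), t) * ⟪H (graphMk d x (ℓ x)), graphMk d (-gradient ℓ x) 1⟫ +
          G (graphMk d x (ℓ x - ℓt x), t) * ⟪H (graphMk d x (ℓ x - ℓt x)),
            graphMk d (gradient (fun z => ℓ z - ℓt z) x) (-1)⟫) := by
  have hO := isOpen_graphDomain (hℓ.continuousOn.mono ball_subset_closedBall)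
    (hℓt.continuousOn.mono ball_subset_closedBall)
  have hbd := isBounded_graphDomain hℓ.continuousOn hℓt.continuousOn
  set D := graphDomain d ρ₁ ℓ ℓt with hD
  have hK := hbd.isCompact_closure
  have hDm := hO.measurableSet
  have hDf : volume D ≠ ⊤ := hbd.measure_lt_top.ne
  have hQ : MapsTo (fun q : ℝ × Esp (d + 1) => (q.2, q.1)) (Ioo 0 T ×ˢ D) (D ×ˢ Ioo 0 T) :=
    fun q hq => ⟨hq.2, hq.1⟩
  have hQc : ContinuousOn (fun q : ℝ × Esp (d + 1) => (q.2, q.1)) (Ioo 0 T ×ˢ D) := by fun_prop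
  have hsub : D ×ˢ Ioo 0 T ⊆ closure D ×ˢ Icc 0 T := prod_mono subset_closure Ioo_subset_Icc_self
  have hKT := hK.prod (isCompact_Icc (a := (0 : ℝ)) (b := T))
  have hOT := hO.prod (isOpen_Ioo (a := (0 : ℝ)) (b := T))
  have hGd : ∀ x ∈ D, ∀ t ∈ Ioo 0 T, HasFDerivAt G (fderiv ℝ G (x, t)) (x, t) :=
    fun x hx t ht => ((hG.differentiableOn one_ne_zero).differentiableAt
      (Filter.mem_of_superset (hOT.mem_nhds ⟨hx, ht⟩) hsub)).hasFDerivAt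
  have bG := (BddContOn.of_isCompact hKT hG.continuousOn hsub).comp hQc hQ
  have bDG := (bddContOn_fderiv hKT hOT hsub hG).comp hQc hQ
  have bH : BddContOn (fun q : ℝ × Esp (d + 1) => H q.2) (Ioo 0 T ×ˢ D) :=
    (BddContOn.of_isCompact hK hH.continuousOn subset_closure).comp continuousOn_snd
      fun q hq => hq.2
  have bdiv : BddContOn (fun q : ℝ × Esp (d + 1) => divergence H q.2) (Ioo 0 T ×ˢ D) :=
    (bddContOn_divergence hO hK hH).comp continuousOn_snd fun q hq => hq.2
  have i1 := (bDG.clm_apply (.const ((0 : Esp (d + 1)), (1 : ℝ)))).integrable_prod (μ := volume)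
    (ν := volume) measurableSet_Ioo hDm measure_Ioo_lt_top.ne hDf
  have i2 := ((bDG.clm_apply (bH.prodMk (.const (0 : ℝ)))).add (bG.mul bdiv)).integrable_prod
    (μ := volume) (ν := volume) measurableSet_Ioo hDm measure_Ioo_lt_top.ne hDf
  have hsplit : ∀ t x, fderiv ℝ G (x, t) (H x, 1) + G (x, t) * divergence H x =
      fderiv ℝ G (x, t) (0, 1) + (fderiv ℝ G (x, t) (H x, 0) + G (x, t) * divergence H x) := by
    intro t x
    rw [← add_assoc, ← map_add]
    simp
  simp only [hsplit]
  rw [integral_integral_add i1 i2]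
  congr 1
  · rw [integral_integral_swap i1, ← integral_sub]
    · refine setIntegral_congr_fun hDm fun x hx => ?_
      have hline : ∀ t, HasDerivAt (fun t : ℝ => (x, t)) ((0 : Esp (d + 1)), (1 : ℝ)) t :=
        fun t => (hasDerivAt_const t x).prodMk (hasDerivAt_id t)
      have hsec : ContinuousOn (fun t : ℝ => (t, x)) (Ioo 0 T) := by fun_prop
      have := intervalIntegral.integral_eq_sub_of_hasDerivAt_of_le hT.le
        (f := fun t => G (x, t)) (f' := fun t => fderiv ℝ G (x, t) (0, 1))
        (hG.continuousOn.comp (by fun_prop) fun t ht => ⟨subset_closure hx, ht⟩)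
        (fun t ht => (hGd x hx t ht).comp_hasDerivAt t (hline t))
        ((intervalIntegrable_iff_integrableOn_Ioo_of_le hT.le).2
          (((bDG.clm_apply (.const ((0 : Esp (d + 1)), (1 : ℝ)))).comp hsec
            fun t ht => ⟨ht, hx⟩).integrableOn measurableSet_Ioo measure_Ioo_lt_top.ne))
      rw [intervalIntegral.integral_of_le hT.le, integral_Ioc_eq_integral_Ioo] at this
      exact this
    · exact (BddContOn.of_isCompact hK (hG.continuousOn.comp (f := fun x => (x, T)) (by fun_prop)
        fun x hx => ⟨hx, right_mem_Icc.2 hT.le⟩) subset_closure).integrableOn hDm hDf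
    · exact (BddContOn.of_isCompact hK (hG.continuousOn.comp (f := fun x => (x, (0 : ℝ)))
        (by fun_prop) fun x hx => ⟨hx, left_mem_Icc.2 hT.le⟩) subset_closure).integrableOn hDm hDf
  · refine setIntegral_congr_fun measurableSet_Ioo fun t ht => ?_
    have hGt : ContDiffOn ℝ 1 (fun x => G (x, t)) (closure D) :=
      hG.comp (f := fun x => (x, t)) (by fun_prop) fun x hx => ⟨hx, Ioo_subset_Icc_self ht⟩
    refine Eq.trans ?_ (integral_graphDomain_divergence hd hρ₁ hℓ hℓt hpos hzero hGt hH)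
    refine setIntegral_congr_fun hDm fun x hx => ?_
    have h1 : HasFDerivAt (fun y : Esp (d + 1) => (y, t))
        ((ContinuousLinearMap.id ℝ (Esp (d + 1))).prod 0) x :=
      (hasFDerivAt_id x).prodMk (hasFDerivAt_const t x)
    have h2 : fderiv ℝ (fun y => G (y, t)) x = _ := ((hGd x hx t ht).comp x h1).fderiv
    dsimp only
    rw [h2]
    simp

end Energy

/-! ### Boundary terms -/

lemma measurableSet_inter_preimage_of_continuousOn {X : Type*} [TopologicalSpace X]
    [MeasurableSpace X] [OpensMeasurableSpace X] {S : Set X} (hS : MeasurableSet S) {h : X → ℝ}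
    (hh : ContinuousOn h S) {F : Set ℝ} (hF : IsClosed F) : MeasurableSet (h ⁻¹' F ∩ S) := by
  obtain ⟨u, hu, he⟩ := continuousOn_iff_isClosed.1 hh F hF
  rw [he]
  exact hu.measurableSet.inter hS

lemma integrable_prod_indicator {X : Type*} [TopologicalSpace X] [SecondCountableTopology X]
    [MeasurableSpace X] [OpensMeasurableSpace X] {μ : Measure X} [SFinite μ] {B : Set X} {a b : ℝ}
    (hB : MeasurableSet B) (hμ : μ B ≠ ⊤) {h : X → ℝ} (hh : ContinuousOn h B) {F : Set ℝ}
    (hF : IsClosed F) {f : ℝ → X → ℝ}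
    (hf : BddContOn (fun q : ℝ × X => f q.1 q.2) (Ioo a b ×ˢ B)) :
    Integrable (fun q : ℝ × X => (h ⁻¹' F).indicator (f q.1) q.2)
      ((volume.restrict (Ioo a b)).prod (μ.restrict B)) := by
  have hi := hf.integrable_prod (μ := volume) (ν := μ) measurableSet_Ioo hB
    measure_Ioo_lt_top.ne hμ
  have hm : MeasurableSet ((univ : Set ℝ) ×ˢ (h ⁻¹' F ∩ B)) :=
    MeasurableSet.univ.prod (measurableSet_inter_preimage_of_continuousOn hB hh hF)
  refine (hi.indicator hm).congr ?_
  rw [Measure.prod_restrict]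
  filter_upwards [ae_restrict_mem (measurableSet_Ioo.prod hB)] with q hq
  by_cases hq' : q.2 ∈ h ⁻¹' F
  · rw [indicator_of_mem hq', indicator_of_mem (by exact ⟨mem_univ _, hq', hq.2⟩)]
  · rw [indicator_of_notMem hq', indicator_of_notMem (fun h => hq' h.2.1)]

lemma boundary_flux_le {h E y ω M a b : ℝ} (hM : h ≤ M) (hy : 0 ≤ y) (hω : 0 ≤ ω)
    (ha : a ≤ E) (hb : E ≤ b) (ha0 : 0 ≤ a) :
    y * E * (h * ω) ≤
      M * b * (if 0 ≤ h then y * ω else 0) - a * (if h ≤ 0 then |h| * y * ω else 0) := by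
  have hyω := mul_nonneg hy hω
  rcases lt_trichotomy h 0 with hh | rfl | hh
  · rw [if_neg hh.not_ge, if_pos hh.le, abs_of_neg hh]
    nlinarith [mul_nonneg (mul_nonneg (neg_nonneg.2 hh.le) hyω) (sub_nonneg.2 ha)]
  · simp only [le_refl, if_true, abs_zero]
    nlinarith [mul_nonneg (mul_nonneg hM (ha0.trans (ha.trans hb))) hyω]
  · rw [if_pos hh.le, if_neg hh.not_ge, mul_zero, sub_zero]
    have : h * E ≤ M * b := mul_le_mul hM hb (ha0.trans ha) (hh.le.trans hM)
    nlinarith [mul_le_mul_of_nonneg_right this hyω]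

lemma setIntegral_setIntegral_mono {X Y : Type*} [MeasurableSpace X] [MeasurableSpace Y]
    {μ : Measure X} {ν : Measure Y} [SFinite μ] [SFinite ν] {A : Set X} {B : Set Y}
    (hA : MeasurableSet A) (hB : MeasurableSet B) {f g : X → Y → ℝ}
    (hf : Integrable (fun q : X × Y => f q.1 q.2) ((μ.restrict A).prod (ν.restrict B)))
    (hg : Integrable (fun q : X × Y => g q.1 q.2) ((μ.restrict A).prod (ν.restrict B)))
    (h : ∀ x ∈ A, ∀ y ∈ B, f x y ≤ g x y) :
    ∫ x in A, ∫ y in B, f x y ∂ν ∂μ ≤ ∫ x in A, ∫ y in B, g x y ∂ν ∂μ := by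
  rw [integral_integral hf, integral_integral hg]
  refine integral_mono_ae hf hg ?_
  rw [Measure.prod_restrict]
  filter_upwards [ae_restrict_mem (hA.prod hB)] with q hq using h _ hq.1 _ hq.2

lemma norm_inv_sqrt_smul_graphMk {d : ℕ} (v : Esp d) {a : ℝ} (ha : a * a = 1) :
    ‖(Real.sqrt (1 + ‖v‖ ^ 2))⁻¹ • graphMk d v a‖ = 1 := by
  have hn : ‖graphMk d v a‖ = Real.sqrt (1 + ‖v‖ ^ 2) := by
    rw [norm_eq_sqrt_real_inner, inner_graphMk, ha, real_inner_self_eq_norm_sq, add_comm]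
  have hpos : 0 < Real.sqrt (1 + ‖v‖ ^ 2) := by positivity
  rw [norm_smul, hn, norm_inv, Real.norm_of_nonneg hpos.le, inv_mul_cancel₀ hpos.ne']

lemma one_le_omegaW {d : ℕ} (m : Esp d → ℝ) (x : Esp d) : 1 ≤ omegaW d m x :=
  Real.one_le_sqrt.2 (by nlinarith [sq_nonneg ‖gradient m x‖])

lemma norm_nuUp {d : ℕ} (m : Esp d → ℝ) (x : Esp d) : ‖nuUp d m x‖ = 1 := by
  simpa [nuUp] using norm_inv_sqrt_smul_graphMk (-gradient m x) (one_mul 1)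

lemma norm_nuDown {d : ℕ} (m : Esp d → ℝ) (x : Esp d) : ‖nuDown d m x‖ = 1 :=
  norm_inv_sqrt_smul_graphMk (gradient m x) (by norm_num)

lemma omegaW_smul_nuUp {d : ℕ} (m : Esp d → ℝ) (x : Esp d) :
    omegaW d m x • nuUp d m x = graphMk d (-gradient m x) 1 :=
  smul_inv_smul₀ (zero_lt_one.trans_le (one_le_omegaW m x)).ne' _

lemma omegaW_smul_nuDown {d : ℕ} (m : Esp d → ℝ) (x : Esp d) :
    omegaW d m x • nuDown d m x = graphMk d (gradient m x) (-1) :=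
  smul_inv_smul₀ (zero_lt_one.trans_le (one_le_omegaW m x)).ne' _

section Gradient

variable {d : ℕ} {ρ : ℝ} {m : Esp d → ℝ}

lemma bddContOn_gradient (hm : ContDiffOn ℝ 1 m (closedBall 0 ρ)) :
    BddContOn (gradient m) (ball 0 ρ) := by
  obtain ⟨hc, C, hC⟩ := bddContOn_fderiv (isCompact_closedBall 0 ρ) isOpen_ball
    ball_subset_closedBall hm
  refine ⟨(InnerProductSpace.toDual ℝ (Esp d)).symm.continuous.comp_continuousOn hc, C,
    fun x hx => ?_⟩
  rw [gradient, LinearIsometryEquiv.norm_map]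
  exact hC x hx

lemma bddContOn_omegaW (hm : ContDiffOn ℝ 1 m (closedBall 0 ρ)) :
    BddContOn (omegaW d m) (ball 0 ρ) := by
  obtain ⟨hc, C, hC⟩ := bddContOn_gradient hm
  refine ⟨(continuousOn_const.add (hc.norm.pow 2)).sqrt, Real.sqrt (1 + C ^ 2), fun x hx => ?_⟩
  rw [omegaW, Real.norm_of_nonneg (Real.sqrt_nonneg _)]
  exact Real.sqrt_le_sqrt (by gcongr; exact hC x hx)

lemma continuousOn_inv_omegaW (hm : ContDiffOn ℝ 1 m (closedBall 0 ρ)) :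
    ContinuousOn (fun x => (omegaW d m x)⁻¹) (ball 0 ρ) :=
  (bddContOn_omegaW hm).continuousOn.inv₀
    fun x _ => (zero_lt_one.trans_le (one_le_omegaW m x)).ne'

lemma bddContOn_nuUp (hm : ContDiffOn ℝ 1 m (closedBall 0 ρ)) :
    BddContOn (nuUp d m) (ball 0 ρ) :=
  ⟨(continuousOn_inv_omegaW hm).smul (continuous_graphMk.comp_continuousOn
    ((bddContOn_gradient hm).continuousOn.neg.prodMk continuousOn_const)), 1,
    fun x _ => (norm_nuUp m x).le⟩

lemma bddContOn_nuDown (hm : ContDiffOn ℝ 1 m (closedBall 0 ρ)) :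
    BddContOn (nuDown d m) (ball 0 ρ) :=
  ⟨(continuousOn_inv_omegaW hm).smul (continuous_graphMk.comp_continuousOn
    ((bddContOn_gradient hm).continuousOn.prodMk continuousOn_const)), 1,
    fun x _ => (norm_nuDown m x).le⟩

end Gradient

lemma BddContOn.inner {X E : Type*} [TopologicalSpace X] [NormedAddCommGroup E]
    [InnerProductSpace ℝ E] {S : Set X} {f g : X → E} (hf : BddContOn f S) (hg : BddContOn g S) :
    BddContOn (fun x => ⟪f x, g x⟫) S := by
  exact ((BddContOn.const (innerSL ℝ (E := E))).clm_apply hf).clm_apply hg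

lemma BddContOn.abs {X : Type*} [TopologicalSpace X] {S : Set X} {f : X → ℝ}
    (hf : BddContOn f S) : BddContOn (fun x => |f x|) S := by
  obtain ⟨hc, C, hC⟩ := hf
  exact ⟨hc.abs, C, fun x hx => by simpa using hC x hx⟩

/-- The flux through one piece of the lateral boundary, split according to its sign. -/
lemma boundary_piece {d : ℕ} {B : Set (Esp d)} (hB : MeasurableSet B) (hBf : volume B ≠ ⊤)
    {T M a b : ℝ} {h ω : Esp d → ℝ} (bh : BddContOn h B) (bω : BddContOn ω B)
    {v E : Esp d → ℝ → ℝ}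
    (bv : BddContOn (fun q : ℝ × Esp d => v q.2 q.1) (Ioo 0 T ×ˢ B))
    (bE : BddContOn (fun q : ℝ × Esp d => E q.2 q.1) (Ioo 0 T ×ˢ B))
    (hω : ∀ x ∈ B, 0 ≤ ω x) (hM : ∀ x ∈ B, h x ≤ M) (ha0 : 0 ≤ a)
    (haE : ∀ t ∈ Ioo 0 T, ∀ x ∈ B, a ≤ E x t) (hEb : ∀ t ∈ Ioo 0 T, ∀ x ∈ B, E x t ≤ b) :
    Integrable (fun q : ℝ × Esp d => v q.2 q.1 ^ 2 * E q.2 q.1 * (h q.2 * ω q.2))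
        ((volume.restrict (Ioo 0 T)).prod (volume.restrict B)) ∧
      Integrable (fun q : ℝ × Esp d =>
          {y | 0 ≤ h y}.indicator (fun y => v y q.1 ^ 2 * ω y) q.2)
        ((volume.restrict (Ioo 0 T)).prod (volume.restrict B)) ∧
      Integrable (fun q : ℝ × Esp d =>
          {y | h y ≤ 0}.indicator (fun y => |h y| * v y q.1 ^ 2 * ω y) q.2)
        ((volume.restrict (Ioo 0 T)).prod (volume.restrict B)) ∧
      ∀ t ∈ Ioo 0 T, ∀ x ∈ B, v x t ^ 2 * E x t * (h x * ω x) ≤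
        M * b * {y | 0 ≤ h y}.indicator (fun y => v y t ^ 2 * ω y) x -
          a * {y | h y ≤ 0}.indicator (fun y => |h y| * v y t ^ 2 * ω y) x := by
  have bh' : BddContOn (fun q : ℝ × Esp d => h q.2) (Ioo 0 T ×ˢ B) :=
    bh.comp continuousOn_snd fun q hq => hq.2
  have bω' : BddContOn (fun q : ℝ × Esp d => ω q.2) (Ioo 0 T ×ˢ B) :=
    bω.comp continuousOn_snd fun q hq => hq.2
  have bv2 : BddContOn (fun q : ℝ × Esp d => v q.2 q.1 ^ 2) (Ioo 0 T ×ˢ B) := by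
    simpa only [sq] using bv.mul bv
  refine ⟨((bv2.mul bE).mul (bh'.mul bω')).integrable_prod measurableSet_Ioo hB
    measure_Ioo_lt_top.ne hBf, ?_, ?_, fun t ht x hx => ?_⟩
  · exact integrable_prod_indicator (f := fun t y => v y t ^ 2 * ω y) hB hBf bh.continuousOn
      isClosed_Ici (bv2.mul bω')
  · exact integrable_prod_indicator (f := fun t y => |h y| * v y t ^ 2 * ω y) hB hBf
      bh.continuousOn isClosed_Iic ((bh'.abs.mul bv2).mul bω')
  · classical
    simp only [indicator_apply, mem_ofPred_eq]
    exact boundary_flux_le (hM x hx) (sq_nonneg _) (hω x hx) (haE t ht x hx) (hEb t ht x hx) ha0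

/-! ### The weighted energy -/

section Weighted

variable {n : ℕ}

lemma fderiv_apply_prod {E : Type*} [NormedAddCommGroup E] [InnerProductSpace ℝ E]
    [CompleteSpace E] {u : E → ℝ → ℝ} {x : E} {t : ℝ}
    (hu : DifferentiableAt ℝ (fun q : E × ℝ => u q.1 q.2) (x, t)) (v : E) :
    fderiv ℝ (fun q : E × ℝ => u q.1 q.2) (x, t) (v, 1) =
      deriv (u x) t + ⟪v, gradient (fun z => u z t) x⟫ := by
  have h1 : HasFDerivAt (fun y : E => (y, t)) ((ContinuousLinearMap.id ℝ E).prod 0) x :=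
    (hasFDerivAt_id x).prodMk (hasFDerivAt_const t x)
  have h2 : HasDerivAt (fun r : ℝ => (x, r)) ((0 : E), (1 : ℝ)) t :=
    (hasDerivAt_const t x).prodMk (hasDerivAt_id t)
  have h3 : deriv (u x) t = _ := (hu.hasFDerivAt.comp_hasDerivAt t h2).deriv
  have h4 : fderiv ℝ (fun z => u z t) x = _ :=
    (HasFDerivAt.comp x (g := fun q : E × ℝ => u q.1 q.2) hu.hasFDerivAt h1).fderiv
  rw [real_inner_comm, ← fderiv_eq_inner_gradient, h3, h4]
  simp only [ContinuousLinearMap.comp_apply, ContinuousLinearMap.prod_apply,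
    ContinuousLinearMap.id_apply, zero_apply]
  rw [← map_add]
  simp

lemma fderiv_weighted_apply {β s : ℝ} {H : Esp n → Esp n} {u : Esp n → ℝ → ℝ} {x : Esp n} {t : ℝ}
    (hu : DifferentiableAt ℝ (fun q : Esp n × ℝ => u q.1 q.2) (x, t))
    (hψ : DifferentiableAt ℝ (psiW H) x) (v : Esp n) :
    fderiv ℝ (fun q : Esp n × ℝ => (u q.1 q.2) ^ 2 * Real.exp (2 * s * phiW β H q.1 q.2)) (x, t)
        (v, 1) =
      2 * u x t * (deriv (u x) t + ⟪v, gradient (fun z => u z t) x⟫) *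
          Real.exp (2 * s * phiW β H x t) +
        2 * s * (-β + ⟪v, gradient (psiW H) x⟫) *
          ((u x t) ^ 2 * Real.exp (2 * s * phiW β H x t)) := by
  have hφ : HasFDerivAt (fun q : Esp n × ℝ => phiW β H q.1 q.2)
      (-(β • ContinuousLinearMap.snd ℝ (Esp n) ℝ) +
        (fderiv ℝ (psiW H) x).comp (ContinuousLinearMap.fst ℝ (Esp n) ℝ)) (x, t) :=
    ((hasFDerivAt_snd (p := (x, t))).const_mul β).neg.add
      (HasFDerivAt.comp (x, t) (g := psiW H) hψ.hasFDerivAt hasFDerivAt_fst)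
  have hG : fderiv ℝ (fun q : Esp n × ℝ =>
      (u q.1 q.2) ^ 2 * Real.exp (2 * s * phiW β H q.1 q.2)) (x, t) = _ :=
    ((hu.hasFDerivAt.pow 2).mul (hφ.const_mul (2 * s)).exp).fderiv
  rw [hG, ← fderiv_apply_prod hu v,
    real_inner_comm, ← fderiv_eq_inner_gradient]
  simp
  ring

lemma weighted_lower_bound {κ s c v A p δ M N e : ℝ} (hs : 0 < s) (hκ : 0 < κ) (hc : κ ≤ c)
    (hp : |p| ≤ M) (hδ : |δ| ≤ N * M) (hsκ : 2 * ((N + 2) * M) ≤ s * κ) (he : 0 ≤ e) :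
    s * κ / 2 * (v ^ 2 * e) - (s * κ)⁻¹ * ((A + p * v) ^ 2 * e) ≤
      2 * v * A * e + 2 * s * c * (v ^ 2 * e) + v ^ 2 * e * δ := by
  have hsκ0 : 0 < s * κ := mul_pos hs hκ
  have hyoung : 0 ≤ (s * κ)⁻¹ * (s * κ * v + (A + p * v)) ^ 2 := by positivity
  have hexp : (s * κ)⁻¹ * (s * κ * v + (A + p * v)) ^ 2 =
      s * κ * v ^ 2 + 2 * v * (A + p * v) + (s * κ)⁻¹ * (A + p * v) ^ 2 := by
    field_simp
    ring
  have h1 : s * κ * v ^ 2 ≤ s * c * v ^ 2 := by gcongr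
  have h2 : p * v ^ 2 ≤ M * v ^ 2 :=
    mul_le_mul_of_nonneg_right (le_of_abs_le hp) (sq_nonneg v)
  have h3 : -(N * M) * v ^ 2 ≤ δ * v ^ 2 :=
    mul_le_mul_of_nonneg_right (neg_le_of_abs_le hδ) (sq_nonneg v)
  have h4 : 2 * ((N + 2) * M) * v ^ 2 ≤ s * κ * v ^ 2 :=
    mul_le_mul_of_nonneg_right hsκ (sq_nonneg v)
  have key : s * κ / 2 * v ^ 2 - (s * κ)⁻¹ * (A + p * v) ^ 2 ≤
      2 * v * A + 2 * s * c * v ^ 2 + v ^ 2 * δ := by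
    rw [hexp] at hyoung
    nlinarith
  calc _ = (s * κ / 2 * v ^ 2 - (s * κ)⁻¹ * (A + p * v) ^ 2) * e := by ring
    _ ≤ (2 * v * A + 2 * s * c * v ^ 2 + v ^ 2 * δ) * e := mul_le_mul_of_nonneg_right key he
    _ = _ := by ring

end Weighted

lemma integral_integral_mul_sub_mul {X Y : Type*} [MeasurableSpace X] [MeasurableSpace Y]
    {μ : Measure X} {ν : Measure Y} [SFinite μ] [SFinite ν] {f g : X → Y → ℝ} (a b : ℝ)
    (hf : Integrable (fun q : X × Y => f q.1 q.2) (μ.prod ν))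
    (hg : Integrable (fun q : X × Y => g q.1 q.2) (μ.prod ν)) :
    ∫ x, ∫ y, (a * f x y - b * g x y) ∂ν ∂μ =
      a * (∫ x, ∫ y, f x y ∂ν ∂μ) - b * ∫ x, ∫ y, g x y ∂ν ∂μ := by
  refine (integral_integral_sub (hf.const_mul a) (hg.const_mul b)).trans ?_
  simp only [integral_const_mul]

section Carleman

variable {d : ℕ} {ρ₁ T M β s : ℝ} {ℓ ℓt : Esp d → ℝ} {H : Esp (d + 1) → Esp (d + 1)}
  {p : Esp (d + 1) → ℝ} {u : Esp (d + 1) → ℝ → ℝ}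

lemma abs_phiW_le {n : ℕ} {H : Esp n → Esp n} {R t : ℝ} {x : Esp n} (hβ : 0 ≤ β)
    (hx : ‖x‖ ≤ R) (hH : ‖H x‖ ≤ M) (ht : t ∈ Icc 0 T) :
    |phiW β H x t| ≤ β * T + R * M := by
  have h1 : |psiW H x| ≤ R * M := (abs_real_inner_le_norm _ _).trans
    (mul_le_mul hx hH (norm_nonneg _) ((norm_nonneg _).trans hx))
  have h2 : |-(β * t)| ≤ β * T := by
    rw [abs_neg, abs_of_nonneg (mul_nonneg hβ ht.1)]
    exact mul_le_mul_of_nonneg_left ht.2 hβ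
  exact (abs_add_le _ _).trans (add_le_add h2 h1)

lemma contDiffOn_psiW {n : ℕ} {H : Esp n → Esp n} {S : Set (Esp n)} (hH : ContDiffOn ℝ 1 H S) :
    ContDiffOn ℝ 1 (psiW H) S :=
  contDiffOn_id.inner ℝ hH

lemma contDiffOn_exp_phiW {n : ℕ} {H : Esp n → Esp n} {S : Set (Esp n)} {J : Set ℝ}
    (hH : ContDiffOn ℝ 1 H S) :
    ContDiffOn ℝ 1 (fun q : Esp n × ℝ => Real.exp (2 * s * phiW β H q.1 q.2)) (S ×ˢ J) := by
  have h1 : ContDiffOn ℝ 1 (fun q : Esp n × ℝ => psiW H q.1) (S ×ˢ J) :=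
    (contDiffOn_psiW hH).comp contDiffOn_fst fun q hq => hq.1
  have h2 : ContDiffOn ℝ 1 (fun q : Esp n × ℝ => -(β * q.2)) (S ×ˢ J) := by fun_prop
  exact (contDiffOn_const.mul (h2.add h1)).exp

/-- The integrated lower bound for the weighted transport operator. -/
lemma integral_transport_ge {n : ℕ} {D : Set (Esp n)} (hO : IsOpen D)
    (hbd : Bornology.IsBounded D) {H : Esp n → Esp n} {p : Esp n → ℝ} {u : Esp n → ℝ → ℝ} {κ : ℝ}
    (hH : ContDiffOn ℝ 1 H (closure D)) (hDH : ∀ x ∈ D, ‖fderiv ℝ H x‖ ≤ M)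
    (hψ : ∀ x ∈ D, κ ≤ -β + ⟪H x, gradient (psiW H) x⟫)
    (hp : Measurable p) (hpM : ∀ x ∈ D, |p x| ≤ M)
    (hu : ContDiffOn ℝ 1 (fun q : Esp n × ℝ => u q.1 q.2) (closure D ×ˢ Icc 0 T))
    (hs : 0 < s) (hκ : 0 < κ) (hsκ : 2 * ((n + 2) * M) ≤ s * κ) :
    s * κ / 2 * (∫ t in Ioo 0 T, ∫ x in D, (u x t) ^ 2 * Real.exp (2 * s * phiW β H x t)) -
        (s * κ)⁻¹ * (∫ t in Ioo 0 T, ∫ x in D,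
          (deriv (u x) t + ⟪H x, gradient (fun z => u z t) x⟫ + p x * u x t) ^ 2 *
            Real.exp (2 * s * phiW β H x t)) ≤
      ∫ t in Ioo 0 T, ∫ x in D, (fderiv ℝ (fun q : Esp n × ℝ =>
          (u q.1 q.2) ^ 2 * Real.exp (2 * s * phiW β H q.1 q.2)) (x, t) (H x, 1) +
        (u x t) ^ 2 * Real.exp (2 * s * phiW β H x t) * divergence H x) := by
  have hK := hbd.isCompact_closure
  have hDm := hO.measurableSet
  have hDf : volume D ≠ ⊤ := hbd.measure_lt_top.ne
  have hQ : MapsTo (fun q : ℝ × Esp n => (q.2, q.1)) (Ioo 0 T ×ˢ D) (D ×ˢ Ioo 0 T) :=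
    fun q hq => ⟨hq.2, hq.1⟩
  have hQc : ContinuousOn (fun q : ℝ × Esp n => (q.2, q.1)) (Ioo 0 T ×ˢ D) := by fun_prop
  have hsub : D ×ˢ Ioo 0 T ⊆ closure D ×ˢ Icc 0 T := prod_mono subset_closure Ioo_subset_Icc_self
  have hKT := hK.prod (isCompact_Icc (a := (0 : ℝ)) (b := T))
  have hOT := hO.prod (isOpen_Ioo (a := (0 : ℝ)) (b := T))
  have hE : ContDiffOn ℝ 1 (fun q : Esp n × ℝ => Real.exp (2 * s * phiW β H q.1 q.2))
    (closure D ×ˢ Icc 0 T) := contDiffOn_exp_phiW hH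
  have hG : ContDiffOn ℝ 1 (fun q : Esp n × ℝ =>
    (u q.1 q.2) ^ 2 * Real.exp (2 * s * phiW β H q.1 q.2)) (closure D ×ˢ Icc 0 T) :=
    (hu.pow 2).mul hE
  have hud : ∀ x ∈ D, ∀ t ∈ Ioo 0 T, DifferentiableAt ℝ (fun q : Esp n × ℝ => u q.1 q.2) (x, t) :=
    fun x hx t ht => (hu.differentiableOn one_ne_zero).differentiableAt
      (Filter.mem_of_superset (hOT.mem_nhds ⟨hx, ht⟩) hsub)
  have hψd : ∀ x ∈ D, DifferentiableAt ℝ (psiW H) x := fun x hx =>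
    ((contDiffOn_psiW hH).differentiableOn one_ne_zero).differentiableAt
      (Filter.mem_of_superset (hO.mem_nhds hx) subset_closure)
  have bu := (BddContOn.of_isCompact hKT hu.continuousOn hsub).comp hQc hQ
  have bE := (BddContOn.of_isCompact hKT hE.continuousOn hsub).comp hQc hQ
  have bG := (BddContOn.of_isCompact hKT hG.continuousOn hsub).comp hQc hQ
  have bDu := (bddContOn_fderiv hKT hOT hsub hu).comp hQc hQ
  have bDG := (bddContOn_fderiv hKT hOT hsub hG).comp hQc hQ
  have bH : BddContOn (fun q : ℝ × Esp n => H q.2) (Ioo 0 T ×ˢ D) :=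
    (BddContOn.of_isCompact hK hH.continuousOn subset_closure).comp continuousOn_snd
      fun q hq => hq.2
  have bdiv : BddContOn (fun q : ℝ × Esp n => divergence H q.2) (Ioo 0 T ×ˢ D) :=
    (bddContOn_divergence hO hK hH).comp continuousOn_snd fun q hq => hq.2
  have bA := bDu.clm_apply (bH.prodMk (.const (1 : ℝ)))
  have iG := bG.integrable_prod (μ := volume) (ν := volume) measurableSet_Ioo hDm
    measure_Ioo_lt_top.ne hDf
  have iL := ((bDG.clm_apply (bH.prodMk (.const (1 : ℝ)))).add (bG.mul bdiv)).integrable_prod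
    (μ := volume) (ν := volume) measurableSet_Ioo hDm measure_Ioo_lt_top.ne hDf
  have i0 := ((bA.mul bA).mul bE).integrable_prod (μ := volume) (ν := volume) measurableSet_Ioo
    hDm measure_Ioo_lt_top.ne hDf
  have i1 := (((BddContOn.const (2 : ℝ)).mul (bA.mul bu)).mul bE).integrable_prod (μ := volume)
    (ν := volume) measurableSet_Ioo hDm measure_Ioo_lt_top.ne hDf
  have hpm : AEStronglyMeasurable (fun q : ℝ × Esp n => p q.2)
      ((volume.restrict (Ioo 0 T)).prod (volume.restrict D)) :=
    (hp.comp measurable_snd).aestronglyMeasurable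
  have hmem : ∀ᵐ q ∂((volume.restrict (Ioo 0 T)).prod (volume.restrict D)),
      q ∈ Ioo 0 T ×ˢ D := by
    rw [Measure.prod_restrict]
    exact ae_restrict_mem (measurableSet_Ioo.prod hDm)
  have hpb : ∀ᵐ q ∂((volume.restrict (Ioo 0 T)).prod (volume.restrict D)), ‖p q.2‖ ≤ M := by
    filter_upwards [hmem] with q hq using hpM _ hq.2
  have iF : Integrable (fun q : ℝ × Esp n => (deriv (u q.2) q.1 +
      ⟪H q.2, gradient (fun z => u z q.1) q.2⟫ + p q.2 * u q.2 q.1) ^ 2 *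
        Real.exp (2 * s * phiW β H q.2 q.1))
      ((volume.restrict (Ioo 0 T)).prod (volume.restrict D)) := by
    refine (i0.add ((i1.add (iG.bdd_mul hpm hpb)).bdd_mul hpm hpb)).congr ?_
    filter_upwards [hmem] with q hq
    rw [← fderiv_apply_prod (hud _ hq.2 _ hq.1)]
    simp only [Pi.add_apply]
    ring
  refine (integral_integral_mul_sub_mul (f := fun t x =>
    (u x t) ^ 2 * Real.exp (2 * s * phiW β H x t)) (g := fun t x => (deriv (u x) t +
      ⟪H x, gradient (fun z => u z t) x⟫ + p x * u x t) ^ 2 * Real.exp (2 * s * phiW β H x t))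
    _ _ iG iF).ge.trans (setIntegral_setIntegral_mono measurableSet_Ioo hDm
      ((iG.const_mul _).sub (iF.const_mul _)) iL fun t ht x hx => ?_)
  rw [fderiv_weighted_apply (hud x hx t ht) (hψd x hx)]
  exact weighted_lower_bound hs hκ (hψ x hx) (hpM x hx) (abs_divergence_le (hDH x hx)) hsκ
    (Real.exp_pos _).le

/-- The lateral boundary flux is controlled by its outgoing part. -/
lemma integral_boundary_flux_le {N : ℝ} (hs : 0 ≤ s)
    (hℓ : ContDiffOn ℝ 1 ℓ (closedBall 0 ρ₁)) (hℓt : ContDiffOn ℝ 1 ℓt (closedBall 0 ρ₁))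
    (hpos : ∀ x' : Esp d, ‖x'‖ < ρ₁ → 0 < ℓt x')
    (hH : ContDiffOn ℝ 1 H (closure (graphDomain d ρ₁ ℓ ℓt)))
    (hHM : ∀ x ∈ closure (graphDomain d ρ₁ ℓ ℓt), ‖H x‖ ≤ M)
    (hN : ∀ x ∈ closure (graphDomain d ρ₁ ℓ ℓt), ∀ t ∈ Icc 0 T, |phiW β H x t| ≤ N)
    (hu : ContDiffOn ℝ 1 (fun q : Esp (d + 1) × ℝ => u q.1 q.2)
      (closure (graphDomain d ρ₁ ℓ ℓt) ×ˢ Icc 0 T)) :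
    ∫ t in Ioo 0 T, ∫ x in ball (0 : Esp d) ρ₁,
        ((u (graphMk d x (ℓ x)) t) ^ 2 * Real.exp (2 * s * phiW β H (graphMk d x (ℓ x)) t) *
            ⟪H (graphMk d x (ℓ x)), graphMk d (-gradient ℓ x) 1⟫ +
          (u (graphMk d x (ℓ x - ℓt x)) t) ^ 2 *
            Real.exp (2 * s * phiW β H (graphMk d x (ℓ x - ℓt x)) t) *
            ⟪H (graphMk d x (ℓ x - ℓt x)),
              graphMk d (gradient (fun z => ℓ z - ℓt z) x) (-1)⟫) ≤
      M * Real.exp (2 * s * N) * (∫ t in Ioo 0 T, ∫ x' in ball (0 : Esp d) ρ₁,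
        ({y : Esp d | 0 ≤ ⟪H (graphMk d y (ℓ y)), nuUp d ℓ y⟫}.indicator
            (fun y => (u (graphMk d y (ℓ y)) t) ^ 2 * omegaW d ℓ y) x'
          + {y : Esp d | 0 ≤
              ⟪H (graphMk d y (ℓ y - ℓt y)), nuDown d (fun z => ℓ z - ℓt z) y⟫}.indicator
            (fun y => (u (graphMk d y (ℓ y - ℓt y)) t) ^ 2 *
              omegaW d (fun z => ℓ z - ℓt z) y) x')) -
      Real.exp (-(2 * s * N)) * (∫ t in Ioo 0 T, ∫ x' in ball (0 : Esp d) ρ₁,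
        ({y : Esp d | ⟪H (graphMk d y (ℓ y)), nuUp d ℓ y⟫ ≤ 0}.indicator
            (fun y => |⟪H (graphMk d y (ℓ y)), nuUp d ℓ y⟫| *
              (u (graphMk d y (ℓ y)) t) ^ 2 * omegaW d ℓ y) x'
          + {y : Esp d |
              ⟪H (graphMk d y (ℓ y - ℓt y)), nuDown d (fun z => ℓ z - ℓt z) y⟫ ≤ 0}.indicator
            (fun y => |⟪H (graphMk d y (ℓ y - ℓt y)), nuDown d (fun z => ℓ z - ℓt z) y⟫| *
              (u (graphMk d y (ℓ y - ℓt y)) t) ^ 2 * omegaW d (fun z => ℓ z - ℓt z) y) x')) := by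
  have hK := (isBounded_graphDomain hℓ.continuousOn hℓt.continuousOn).isCompact_closure
  have hm := hℓ.sub hℓt
  have hc1 := continuousOn_graphMk (hℓ.continuousOn.mono ball_subset_closedBall)
  have hc2 := continuousOn_graphMk (hm.continuousOn.mono ball_subset_closedBall)
  have hm1 := mapsTo_upper (ℓ := ℓ) hpos
  have hm2 := mapsTo_lower (ℓ := ℓ) hpos
  set D := graphDomain d ρ₁ ℓ ℓt
  have bH := BddContOn.of_isCompact hK hH.continuousOn subset_rfl
  have hKT := hK.prod (isCompact_Icc (a := (0 : ℝ)) (b := T))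
  have bu := BddContOn.of_isCompact hKT hu.continuousOn subset_rfl
  have bE := BddContOn.of_isCompact hKT
    (contDiffOn_exp_phiW (β := β) (s := s) (J := Icc 0 T) hH).continuousOn subset_rfl
  have hlow : ∀ x ∈ closure D, ∀ t ∈ Icc 0 T,
      Real.exp (-(2 * s * N)) ≤ Real.exp (2 * s * phiW β H x t) := fun x hx t ht =>
    Real.exp_le_exp.2 (by nlinarith [neg_le_of_abs_le (hN x hx t ht)])
  have hup : ∀ x ∈ closure D, ∀ t ∈ Icc 0 T,
      Real.exp (2 * s * phiW β H x t) ≤ Real.exp (2 * s * N) := fun x hx t ht =>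
    Real.exp_le_exp.2 (by nlinarith [le_of_abs_le (hN x hx t ht)])
  have hflux : ∀ x ∈ closure D, ∀ v : Esp (d + 1), ‖v‖ = 1 → ⟪H x, v⟫ ≤ M := fun x hx v hv =>
    (real_inner_le_norm _ _).trans (by rw [hv, mul_one]; exact hHM x hx)
  have piece : ∀ (γ ν : Esp d → Esp (d + 1)) (ω : Esp d → ℝ), ContinuousOn γ (ball 0 ρ₁) →
      MapsTo γ (ball 0 ρ₁) (closure D) → BddContOn ν (ball 0 ρ₁) → BddContOn ω (ball 0 ρ₁) →
      (∀ x, ‖ν x‖ = 1) → (∀ x, 1 ≤ ω x) → _ := fun γ ν ω hγ hγm bν bω hν hω =>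
    boundary_piece (T := T) (M := M) (h := fun x => ⟪H (γ x), ν x⟫) (ω := ω)
      (v := fun x => u (γ x)) (E := fun x t => Real.exp (2 * s * phiW β H (γ x) t))
      (a := Real.exp (-(2 * s * N))) (b := Real.exp (2 * s * N))
      measurableSet_ball measure_ball_lt_top.ne ((bH.comp hγ hγm).inner bν) bω
      (bu.comp (φ := fun q : ℝ × Esp d => (γ q.2, q.1))
        ((hγ.comp continuousOn_snd fun q hq => hq.2).prodMk continuousOn_fst)
        fun q hq => ⟨hγm hq.2, Ioo_subset_Icc_self hq.1⟩)
      (bE.comp (φ := fun q : ℝ × Esp d => (γ q.2, q.1))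
        ((hγ.comp continuousOn_snd fun q hq => hq.2).prodMk continuousOn_fst)
        fun q hq => ⟨hγm hq.2, Ioo_subset_Icc_self hq.1⟩)
      (fun x _ => zero_le_one.trans (hω x)) (fun x hx => hflux _ (hγm hx) _ (hν x))
      (Real.exp_pos _).le
      (fun t ht x hx => hlow _ (hγm hx) t (Ioo_subset_Icc_self ht))
      (fun t ht x hx => hup _ (hγm hx) t (Ioo_subset_Icc_self ht))
  obtain ⟨w1, p1, q1, le1⟩ := piece (fun x => graphMk d x (ℓ x)) (nuUp d ℓ) (omegaW d ℓ) hc1 hm1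
    (bddContOn_nuUp hℓ) (bddContOn_omegaW hℓ) (norm_nuUp ℓ) (one_le_omegaW ℓ)
  obtain ⟨w2, p2, q2, le2⟩ := piece (fun x => graphMk d x (ℓ x - ℓt x))
    (nuDown d fun z => ℓ z - ℓt z) (omegaW d fun z => ℓ z - ℓt z) hc2 hm2
    (bddContOn_nuDown hm) (bddContOn_omegaW hm) (norm_nuDown _) (one_le_omegaW _)
  simp only [← omegaW_smul_nuUp, ← omegaW_smul_nuDown, real_inner_smul_right]
  simp only [mul_comm (omegaW _ _ _) (inner ℝ _ _)]
  rw [← integral_integral_mul_sub_mul _ _ (p1.add p2) (q1.add q2)]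
  refine setIntegral_setIntegral_mono measurableSet_Ioo measurableSet_ball (w1.add w2)
    (((p1.add p2).const_mul _).sub ((q1.add q2).const_mul _)) fun t ht x hx => ?_
  linarith [le1 t ht x hx, le2 t ht x hx]

end Carleman

/-- Absorption of the constants in the weighted energy inequality. -/
lemma carleman_absorb {κ a M N C s F J P Q X Y : ℝ} (hκ : 0 < κ) (ha : 0 < a) (ha1 : a ≤ 1)
    (haκ : a ≤ κ / 2) (hN : 0 ≤ N) (hC1 : 1 / a ≤ C) (hC2 : 1 / (a * κ) ≤ C)
    (hC3 : M / a ≤ C) (hC4 : 4 * N + 1 ≤ C) (hs : 2 ≤ s) (hF : 0 ≤ F) (hJ : 0 ≤ J) (hP : 0 ≤ P)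
    (hQ : 0 ≤ Q) (hX : 0 ≤ X) (hY : 0 ≤ Y)
    (h : s * κ / 2 * J - (s * κ)⁻¹ * F ≤
      Y - X + (M * Real.exp (2 * s * N) * P - Real.exp (-(2 * s * N)) * Q)) :
    s * X + s ^ 2 * J + C * Real.exp (-(C * s)) * Q ≤
      C * F + C * Real.exp (C * s) * P + C * s * Y := by
  have hs0 : 0 < s := by linarith
  have hC0 : 0 < C := by linarith
  have e1 : C * Real.exp (-(C * s)) ≤ s * Real.exp (-(2 * s * N)) := by
    have h1 : Real.exp (-(C * s)) = Real.exp (-(C * s / 2)) * Real.exp (-(C * s / 2)) := by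
      rw [← Real.exp_add]; ring_nf
    have h2 : Real.exp (-(C * s / 2)) ≤ Real.exp (-(2 * s * N)) :=
      Real.exp_le_exp.2 (by nlinarith)
    have h3 : C * Real.exp (-(C * s / 2)) ≤ s := by
      rw [Real.exp_neg, ← div_eq_mul_inv, div_le_iff₀ (Real.exp_pos _)]
      have h4 := Real.add_one_le_exp (C * s / 2)
      nlinarith [mul_le_mul_of_nonneg_left h4 hs0.le,
        mul_nonneg hC0.le (mul_nonneg (sub_nonneg.2 hs) (by linarith : 0 ≤ s + 2))]
    rw [h1, ← mul_assoc]
    exact mul_le_mul h3 h2 (Real.exp_pos _).le hs0.le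
  have e2 : s * Real.exp (2 * s * N) ≤ Real.exp (C * s) := by
    calc s * Real.exp (2 * s * N) ≤ Real.exp s * Real.exp (2 * s * N) := by
          gcongr
          linarith [Real.add_one_le_exp s]
      _ = Real.exp (s + 2 * s * N) := (Real.exp_add _ _).symm
      _ ≤ Real.exp (C * s) := Real.exp_le_exp.2 (by nlinarith [mul_nonneg hs0.le hN])
  have h' : s ^ 2 * (κ / 2) * J + s * X + s * Real.exp (-(2 * s * N)) * Q ≤
      s * Y + 1 / κ * F + M * (s * Real.exp (2 * s * N)) * P := by
    have h1 := mul_le_mul_of_nonneg_left h hs0.le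
    have h2 : s * ((s * κ)⁻¹ * F) = 1 / κ * F := by field_simp
    linarith
  have t1 : a * (s * X) ≤ s * X := mul_le_of_le_one_left (by positivity) ha1
  have t2 : a * (s ^ 2 * J) ≤ s ^ 2 * (κ / 2) * J := by
    nlinarith [mul_le_mul_of_nonneg_right haκ (by positivity : 0 ≤ s ^ 2 * J)]
  have t3 : a * (C * Real.exp (-(C * s)) * Q) ≤ s * Real.exp (-(2 * s * N)) * Q :=
    (mul_le_of_le_one_left (by positivity) ha1).trans (by gcongr)
  have t4 : s * Y ≤ a * (C * s * Y) := by
    have := (div_le_iff₀' ha).1 hC1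
    nlinarith [mul_le_mul_of_nonneg_right this (by positivity : 0 ≤ s * Y)]
  have t5 : 1 / κ * F ≤ a * (C * F) := by
    have : 1 / κ ≤ a * C := by
      rw [div_le_iff₀ hκ]
      linarith [(div_le_iff₀' (mul_pos ha hκ)).1 hC2]
    nlinarith [mul_le_mul_of_nonneg_right this hF]
  have t6 : M * (s * Real.exp (2 * s * N)) * P ≤ a * (C * Real.exp (C * s) * P) := by
    have := (div_le_iff₀' ha).1 hC3
    calc M * (s * Real.exp (2 * s * N)) * P ≤ a * C * Real.exp (C * s) * P := by gcongr
      _ = _ := by ring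
  refine le_of_mul_le_mul_left ?_ ha
  linarith

/-- **Proposition 1** (Carleman estimate for the transport operator). -/
theorem proposition1_carleman_estimate
    (d : ℕ) (hd : 1 ≤ d) (T M δ₀ ρ₁ : ℝ)
    (hT : 0 < T) (hM : 0 < M) (hδ₀ : 0 < δ₀) (hρ₁ : 0 < ρ₁)
    (ℓ ℓt : Esp d → ℝ)
    (hℓ : ContDiffOn ℝ 2 ℓ (closedBall 0 ρ₁))
    (hℓt : ContDiffOn ℝ 2 ℓt (closedBall 0 ρ₁))
    (hℓtpos : ∀ x' : Esp d, ‖x'‖ < ρ₁ → 0 < ℓt x')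
    (hℓt0 : ∀ x' : Esp d, ‖x'‖ = ρ₁ → ℓt x' = 0)
    (β μ : ℝ) (hβ : 0 < β) (hβμ : β < μ) :
    ∃ s₀ > (0:ℝ), ∃ C > (0:ℝ),
      ∀ (H : Esp (d+1) → Esp (d+1)) (p : Esp (d+1) → ℝ) (u : Esp (d+1) → ℝ → ℝ) (s : ℝ),
        IsAdmissible M δ₀ (closure (graphDomain d ρ₁ ℓ ℓt)) H →
        (∀ x ∈ closure (graphDomain d ρ₁ ℓ ℓt), μ ≤ ⟪H x, gradient (psiW H) x⟫) →
        Measurable p → (∀ x ∈ graphDomain d ρ₁ ℓ ℓt, |p x| ≤ M) →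
        ContDiffOn ℝ 1 (fun q : Esp (d+1) × ℝ => u q.1 q.2)
          (closure (graphDomain d ρ₁ ℓ ℓt) ×ˢ Icc 0 T) →
        s₀ < s →
        s * (∫ x in graphDomain d ρ₁ ℓ ℓt, (u x 0) ^ 2 * Real.exp (2 * s * phiW β H x 0))
          + s ^ 2 * (∫ t in Ioo 0 T, ∫ x in graphDomain d ρ₁ ℓ ℓt,
              (u x t) ^ 2 * Real.exp (2 * s * phiW β H x t))
          + C * Real.exp (-(C * s)) *
            (∫ t in Ioo 0 T, ∫ x' in ball (0 : Esp d) ρ₁,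
              ({y : Esp d | ⟪H (graphMk d y (ℓ y)), nuUp d ℓ y⟫ ≤ 0}.indicator
                  (fun y => |⟪H (graphMk d y (ℓ y)), nuUp d ℓ y⟫| *
                    (u (graphMk d y (ℓ y)) t) ^ 2 * omegaW d ℓ y) x'
                + {y : Esp d |
                    ⟪H (graphMk d y (ℓ y - ℓt y)), nuDown d (fun z => ℓ z - ℓt z) y⟫
                      ≤ 0}.indicator
                  (fun y =>
                    |⟪H (graphMk d y (ℓ y - ℓt y)),
                        nuDown d (fun z => ℓ z - ℓt z) y⟫| *
                    (u (graphMk d y (ℓ y - ℓt y)) t) ^ 2 * omegaW d (fun z => ℓ z - ℓt z) y) x'))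
        ≤ C * (∫ t in Ioo 0 T, ∫ x in graphDomain d ρ₁ ℓ ℓt,
              (deriv (u x) t + ⟪H x, gradient (fun z => u z t) x⟫ + p x * u x t) ^ 2
                * Real.exp (2 * s * phiW β H x t))
          + C * Real.exp (C * s) *
            (∫ t in Ioo 0 T, ∫ x' in ball (0 : Esp d) ρ₁,
              ({y : Esp d | 0 ≤ ⟪H (graphMk d y (ℓ y)), nuUp d ℓ y⟫}.indicator
                  (fun y => (u (graphMk d y (ℓ y)) t) ^ 2 * omegaW d ℓ y) x'
                + {y : Esp d | 0 ≤
                    ⟪H (graphMk d y (ℓ y - ℓt y)),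
                      nuDown d (fun z => ℓ z - ℓt z) y⟫}.indicator
                  (fun y => (u (graphMk d y (ℓ y - ℓt y)) t) ^ 2 * omegaW d (fun z => ℓ z - ℓt z) y) x'))
          + C * s * (∫ x in graphDomain d ρ₁ ℓ ℓt,
              (u x T) ^ 2 * Real.exp (2 * s * phiW β H x T)) := by
  have hℓ1 : ContDiffOn ℝ 1 ℓ (closedBall 0 ρ₁) := hℓ.of_le one_le_two
  have hℓt1 : ContDiffOn ℝ 1 ℓt (closedBall 0 ρ₁) := hℓt.of_le one_le_two
  have hO := isOpen_graphDomain (hℓ.continuousOn.mono ball_subset_closedBall)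
    (hℓt.continuousOn.mono ball_subset_closedBall)
  have hbd := isBounded_graphDomain hℓ.continuousOn hℓt.continuousOn
  obtain ⟨R, hR0, hR⟩ := hbd.closure.exists_pos_norm_le
  have hκ : 0 < μ - β := sub_pos.2 hβμ
  set κ := μ - β with hκ_def
  set N := β * T + R * M with hN_def
  set a := min 1 (κ / 2) with ha_def
  have hN : 0 ≤ N := by positivity
  have ha : 0 < a := lt_min one_pos (half_pos hκ)
  have hc1 : 0 < 1 / a := by positivity
  have hc2 : 0 < 1 / (a * κ) := by positivity
  have hc3 : 0 < M / a := by positivity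
  have hc4 : 0 < 2 * ((((d + 1 : ℕ) : ℝ) + 2) * M) / κ := by positivity
  refine ⟨2 + 2 * ((((d + 1 : ℕ) : ℝ) + 2) * M) / κ, by positivity,
    1 / a + 1 / (a * κ) + M / a + (4 * N + 1), by positivity, ?_⟩
  rintro H p u s ⟨U, -, -, hKU, hHU, hHM, hDHM, -⟩ hψ hp hpM hu hs
  have hH := hHU.mono hKU
  have hs0 : 0 < s := by linarith
  have hflow := integral_transport_eq hd hT hρ₁ hℓ1 hℓt1 hℓtpos hℓt0
    (G := fun q => (u q.1 q.2) ^ 2 * Real.exp (2 * s * phiW β H q.1 q.2))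
    ((hu.pow 2).mul (contDiffOn_exp_phiW hH)) hH
  have hge := integral_transport_ge (T := T) (β := β) hO hbd hH
    (fun x hx => hDHM x (hKU (subset_closure hx)))
    (fun x hx => by linarith [hψ x (subset_closure hx)]) hp hpM hu hs0 hκ
    ((div_le_iff₀ hκ).1 (by linarith))
  have hle := integral_boundary_flux_le (N := N) hs0.le hℓ1 hℓt1 hℓtpos hH
    (fun x hx => hHM x (hKU hx))
    (fun x hx t ht => abs_phiW_le hβ.le (hR x hx) (hHM x (hKU hx)) ht) hu
  refine carleman_absorb hκ ha (min_le_left _ _) (min_le_right _ _) hN (by linarith)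
    (by linarith) (by linarith) (by linarith) (by linarith) ?_ ?_ ?_ ?_ ?_ ?_
    (hge.trans (hflow.le.trans (by gcongr)))
  · positivity
  · positivity
  · exact integral_nonneg fun t => integral_nonneg fun x => add_nonneg
      (indicator_nonneg (fun y _ => mul_nonneg (sq_nonneg _) (Real.sqrt_nonneg _)) x)
      (indicator_nonneg (fun y _ => mul_nonneg (sq_nonneg _) (Real.sqrt_nonneg _)) x)
  · exact integral_nonneg fun t => integral_nonneg fun x => add_nonneg
      (indicator_nonneg (fun y _ => mul_nonneg (by positivity) (Real.sqrt_nonneg _)) x)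
      (indicator_nonneg (fun y _ => mul_nonneg (by positivity) (Real.sqrt_nonneg _)) x)
  · exact integral_nonneg fun x => by positivity
  · exact integral_nonneg fun x => by positivity
end
end

section
/- (Lemma 1.) Let D ⊂ ℝ^n be a bounded set with 0 ∈ closure(D) and diam(D) < δ₀²/(2M²). Then every vector field H that is (M,δ₀)-admissible on closure(D) satisfies ⟨H(x), ∇ψ_H(x)⟩ ≥ δ₀²/2 for every x ∈ closure(D). -/
noncomputable section

open MeasureTheory Metric Set
open scoped RealInnerProductSpace

/-- The directional derivative of `ψ_H` along `H` is `|H|² + ⟨x, DH(x) H(x)⟩`. -/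
theorem inner_gradient_psiW {n : ℕ} {H : Esp n → Esp n} {x : Esp n}
    (hx : DifferentiableAt ℝ H x) :
    ⟪H x, gradient (psiW H) x⟫ = ‖H x‖ ^ 2 + ⟪x, fderiv ℝ H x (H x)⟫ := by
  have hfderiv : fderiv ℝ (psiW H) x (H x) = ⟪x, fderiv ℝ H x (H x)⟫ + ⟪H x, H x⟫ := by
    change fderiv ℝ (fun y => ⟪y, H y⟫) x (H x) = _
    simpa using fderiv_inner_apply ℝ differentiableAt_id hx (H x)
  rw [real_inner_comm, gradient, InnerProductSpace.toDual_symm_apply, hfderiv,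
    real_inner_self_eq_norm_sq, add_comm]

/-- **Lemma 1.** -/
theorem lemma1_transversality
    (n : ℕ) (hn : 1 ≤ n) (M δ₀ : ℝ) (hM : 0 < M) (hδ₀ : 0 < δ₀)
    (D : Set (Esp n)) (hDb : Bornology.IsBounded D)
    (h0 : (0 : Esp n) ∈ closure D)
    (hdiam : Metric.diam D < δ₀ ^ 2 / (2 * M ^ 2))
    (H : Esp n → Esp n) (hH : IsAdmissible M δ₀ (closure D) H) :
    ∀ x ∈ closure D, δ₀ ^ 2 / 2 ≤ ⟪H x, gradient (psiW H) x⟫ := by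
  obtain ⟨U, hUo, -, hKU, hC, hHM, hDM, hHδ⟩ := hH
  intro x hx
  have hxU := hKU hx
  have hdiff : DifferentiableAt ℝ H x :=
    (hC.contDiffAt (hUo.mem_nhds hxU)).differentiableAt one_ne_zero
  have hnorm : ‖x‖ ≤ Metric.diam D := by
    simpa [Metric.diam_closure] using Metric.dist_le_diam_of_mem hDb.closure hx h0
  have hsmall : ‖x‖ * (M * M) ≤ δ₀ ^ 2 / 2 := by
    have h := hnorm.trans hdiam.le
    rw [le_div_iff₀ (by positivity)] at h
    linarith
  have hDH : ‖fderiv ℝ H x (H x)‖ ≤ M * M :=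
    (fderiv ℝ H x).le_of_opNorm_le_of_le (hDM x hxU) (hHM x hxU)
  have hinner : |⟪x, fderiv ℝ H x (H x)⟫| ≤ ‖x‖ * (M * M) :=
    (abs_real_inner_le_norm _ _).trans (by gcongr)
  have hsq : δ₀ ^ 2 ≤ ‖H x‖ ^ 2 := by
    have := (hHδ x hx).le
    gcongr
  rw [inner_gradient_psiW hdiff]
  linarith [neg_le_of_abs_le hinner]
end
end
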